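/- arXiv:1301.6211 — 2 statements merged into one kernel-verified Lean document; each statement's English description precedes it below -/
import Mathlib

section
/- Fix 1/3 < θ < 1 and 0 < ε < θ, and set G = T^θ. Define w : ℝ → ℂ by w(y) = ∫_ℝ e^{−u²}(Gu + T)·e^{2πi y u} du. Then for every A > 0 there exist constants C > 0 and T₀ > 0 (depending only on θ, ε, A) such that for all T ≥ T₀ and all real x with 0 < x < G·T^{1−ε} one has |∫_ℝ cos(2πTy/G + x·cosh(πy/G))·w(y) dy| ≤ C·G·(max{G/T, 1/G})^A; in particular the integral is O_A(T^{−A}). -/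
open Real MeasureTheory

/-!
On the real axis the inner integral is `√π e^{-π²y²} (T + iπGy)`, so the integral is controlled by
`∫ yᵏ e^{-π²y²} e^{iφ(y)} dy` with `φ(z) = αz + x cosh βz`, `α = 2πT/G`, `β = π/G`. As
`Im φ(y + is) = αs + x sinh(βy) sin(βs)`, as long as `4|x|β²Y ≤ α` the linear term dominates for
`|y| ≤ Y`, `0 ≤ s ≤ 1`, and moving the segment `[-Y, Y]` up by `i` gains `e^{-α/2}`. The vertical
sides and the real tails cost `e^{-cY²}`; the line cannot be shifted as a whole, because
`x sinh(βy) sin(βs)` is exponentially negative on one of its ends. For `Y` a small power of `T`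
everything is smaller than any power of `T`.
-/

theorem norm_intervalIntegral_le_of_norm_le_on_rect {E : Type*} [NormedAddCommGroup E]
    [NormedSpace ℂ E] {f : ℂ → E} {a b h M N : ℝ} (hab : a ≤ b) (hh : 0 ≤ h)
    (hf : DifferentiableOn ℂ f (Set.Icc a b ×ℂ Set.Icc 0 h))
    (htop : ∀ y ∈ Set.Icc a b, ‖f (y + h * Complex.I)‖ ≤ M)
    (hleft : ∀ s ∈ Set.Icc 0 h, ‖f (a + s * Complex.I)‖ ≤ N)
    (hright : ∀ s ∈ Set.Icc 0 h, ‖f (b + s * Complex.I)‖ ≤ N) :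
    ‖∫ y in a..b, f y‖ ≤ M * (b - a) + 2 * N * h := by
  have hrect := Complex.integral_boundary_rect_eq_zero_of_differentiableOn f a (b + h * Complex.I)
    (by simpa [Set.uIcc_of_le hab, Set.uIcc_of_le hh] using hf)
  simp only [Complex.ofReal_re, Complex.ofReal_im, Complex.add_re, Complex.add_im,
    Complex.re_ofReal_mul, Complex.im_ofReal_mul, Complex.I_re, Complex.I_im, mul_zero, mul_one,
    add_zero, zero_add, Complex.ofReal_zero, zero_mul] at hrect
  have hshift : ∫ y in a..b, f y =
      (∫ y in a..b, f (y + h * Complex.I)) -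
        Complex.I • (∫ s in (0 : ℝ)..h, f (b + s * Complex.I)) +
        Complex.I • ∫ s in (0 : ℝ)..h, f (a + s * Complex.I) := by
    rw [← sub_eq_zero, ← hrect]
    abel
  have norm_le {g : ℝ → E} {p q B : ℝ} (hpq : p ≤ q) (hg : ∀ t ∈ Set.Icc p q, ‖g t‖ ≤ B) :
      ‖∫ t in p..q, g t‖ ≤ B * (q - p) := by
    rw [← abs_of_nonneg (sub_nonneg.mpr hpq)]
    refine intervalIntegral.norm_integral_le_of_norm_le_const fun t ht => hg t ?_
    exact Set.Ioc_subset_Icc_self (Set.uIoc_of_le hpq ▸ ht)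
  calc ‖∫ y in a..b, f y‖
      ≤ ‖∫ y in a..b, f (y + h * Complex.I)‖ + ‖∫ s in (0 : ℝ)..h, f (b + s * Complex.I)‖ +
          ‖∫ s in (0 : ℝ)..h, f (a + s * Complex.I)‖ := by
        rw [hshift]
        refine (norm_add_le _ _).trans ((add_le_add_left (norm_sub_le _ _) _).trans_eq ?_)
        simp only [norm_smul, Complex.norm_I, one_mul]
    _ ≤ M * (b - a) + N * (h - 0) + N * (h - 0) := by
        gcongr
        exacts [norm_le hab htop, norm_le hh hright, norm_le hh hleft]
    _ = M * (b - a) + 2 * N * h := by ring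

theorem integrable_abs_pow_mul_exp_neg_mul_sq (k : ℕ) {b : ℝ} (hb : 0 < b) :
    Integrable fun y : ℝ => |y| ^ k * exp (-b * y ^ 2) := by
  have h := (integrable_rpow_mul_exp_neg_mul_sq hb (s := k)
    (by linarith [k.cast_nonneg (α := ℝ)])).norm
  simpa [rpow_natCast, abs_mul] using h

/-- The oscillating Gaussian `zᵏ e^{-bz²} e^{iφ(z)}` with phase `φ`, as a function on `ℂ` so that
its integral over `ℝ` can be estimated by moving the contour. -/
noncomputable def gaussianOsc (b : ℝ) (k : ℕ) (φ : ℂ → ℂ) (z : ℂ) : ℂ :=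
  z ^ k * Complex.exp (-b * z ^ 2 + Complex.I * φ z)

namespace gaussianOsc

variable {b c Y : ℝ} {k : ℕ} {φ : ℂ → ℂ} {ψ : ℝ → ℝ}

theorem differentiable (b : ℝ) (k : ℕ) (hφ : Differentiable ℂ φ) :
    Differentiable ℂ (gaussianOsc b k φ) := by
  unfold gaussianOsc
  fun_prop

theorem norm_add_mul_I (b : ℝ) (k : ℕ) (φ : ℂ → ℂ) (y s : ℝ) :
    ‖gaussianOsc b k φ (y + s * Complex.I)‖ =
      ‖(y : ℂ) + s * Complex.I‖ ^ k *
        exp (-b * (y ^ 2 - s ^ 2) - (φ (y + s * Complex.I)).im) := by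
  have hsq : -(b : ℂ) * (y + s * Complex.I) ^ 2 =
      ((-b * (y ^ 2 - s ^ 2) : ℝ) : ℂ) + ((-b * (2 * y * s) : ℝ) : ℂ) * Complex.I := by
    push_cast
    linear_combination -(b : ℂ) * s ^ 2 * Complex.I_sq
  rw [gaussianOsc, norm_mul, norm_pow, Complex.norm_exp, hsq, Complex.add_re, Complex.add_re,
    Complex.ofReal_re, Complex.re_ofReal_mul, Complex.I_re, Complex.I_mul_re, mul_zero, add_zero,
    ← sub_eq_add_neg]

theorem norm_ofReal_le {y : ℝ} (hφ : 0 ≤ (φ y).im) :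
    ‖gaussianOsc b k φ y‖ ≤ |y| ^ k * exp (-b * y ^ 2) := by
  have h := norm_add_mul_I b k φ y 0
  simp only [Complex.ofReal_zero, zero_mul, add_zero, Complex.norm_real, norm_eq_abs] at h
  rw [h]
  gcongr
  linarith

theorem norm_add_mul_I_le (hb : 0 ≤ b) {y s : ℝ} (hy : |y| ≤ Y) (hs₀ : 0 ≤ s) (hs₁ : s ≤ 1)
    (hc : c ≤ (φ (y + s * Complex.I)).im) :
    ‖gaussianOsc b k φ (y + s * Complex.I)‖ ≤ exp b * (Y + 1) ^ k * exp (-b * y ^ 2 - c) := by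
  have hnorm : ‖(y : ℂ) + s * Complex.I‖ ≤ Y + 1 := by
    refine (norm_add_le _ _).trans ?_
    simp only [norm_mul, Complex.norm_I, mul_one, Complex.norm_real, norm_eq_abs,
      abs_of_nonneg hs₀]
    linarith
  have hbs : b * s ^ 2 ≤ b := mul_le_of_le_one_right hb (pow_le_one₀ hs₀ hs₁)
  have hY : 0 ≤ Y := (abs_nonneg y).trans hy
  rw [norm_add_mul_I, mul_comm (exp b), mul_assoc, ← exp_add]
  gcongr
  linarith

theorem integrable_ofReal (hb : 0 < b) (hφ : Differentiable ℂ φ)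
    (hreal : ∀ y : ℝ, 0 ≤ (φ y).im) : Integrable fun y : ℝ => gaussianOsc b k φ y :=
  (integrable_abs_pow_mul_exp_neg_mul_sq k hb).mono'
    ((differentiable b k hφ).continuous.comp Complex.continuous_ofReal).aestronglyMeasurable
    (.of_forall fun y => norm_ofReal_le (hreal y))

theorem norm_intervalIntegral_le (hb : 0 ≤ b) (hφ : Differentiable ℂ φ) (hc : 0 ≤ c) (hY : 0 ≤ Y)
    (him : ∀ y s : ℝ, |y| ≤ Y → 0 ≤ s → s ≤ 1 → c * s ≤ (φ (y + s * Complex.I)).im) :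
    ‖∫ y in -Y..Y, gaussianOsc b k φ y‖ ≤
      2 * exp b * (Y + 1) ^ (k + 1) * (exp (-c) + exp (-b * Y ^ 2)) := by
  have htop : ∀ y ∈ Set.Icc (-Y) Y, ‖gaussianOsc b k φ (y + (1 : ℝ) * Complex.I)‖ ≤
      exp b * (Y + 1) ^ k * exp (-c) := by
    intro y hy
    have hy' := abs_le.mpr hy
    refine (norm_add_mul_I_le hb hy' zero_le_one le_rfl (him y 1 hy' zero_le_one le_rfl)).trans ?_
    gcongr
    nlinarith [mul_nonneg hb (sq_nonneg y)]
  have hside : ∀ y : ℝ, |y| = Y → ∀ s ∈ Set.Icc (0 : ℝ) 1,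
      ‖gaussianOsc b k φ (y + s * Complex.I)‖ ≤ exp b * (Y + 1) ^ k * exp (-b * Y ^ 2) := by
    intro y hy s hs
    refine (norm_add_mul_I_le hb hy.le hs.1 hs.2 (him y s hy.le hs.1 hs.2)).trans ?_
    rw [← hy, sq_abs]
    gcongr
    linarith [mul_nonneg hc hs.1]
  calc ‖∫ y in -Y..Y, gaussianOsc b k φ y‖
      ≤ exp b * (Y + 1) ^ k * exp (-c) * (Y - -Y) +
          2 * (exp b * (Y + 1) ^ k * exp (-b * Y ^ 2)) * 1 :=
        norm_intervalIntegral_le_of_norm_le_on_rect (by linarith) zero_le_one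
          (differentiable b k hφ).differentiableOn htop
          (hside (-Y) (by rw [abs_neg, abs_of_nonneg hY])) (hside Y (abs_of_nonneg hY))
    _ = 2 * exp b * (Y + 1) ^ k * (Y * exp (-c) + 1 * exp (-b * Y ^ 2)) := by ring
    _ ≤ 2 * exp b * (Y + 1) ^ k * ((Y + 1) * exp (-c) + (Y + 1) * exp (-b * Y ^ 2)) := by
        gcongr <;> linarith
    _ = 2 * exp b * (Y + 1) ^ (k + 1) * (exp (-c) + exp (-b * Y ^ 2)) := by ring

theorem norm_setIntegral_compl_Ioc_le (hb : 0 < b) (hreal : ∀ y : ℝ, 0 ≤ (φ y).im) (hY : 0 ≤ Y) :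
    ‖∫ y in (Set.Ioc (-Y) Y)ᶜ, gaussianOsc b k φ y‖ ≤
      (∫ y : ℝ, |y| ^ k * exp (-(b / 2) * y ^ 2)) * exp (-(b / 2) * Y ^ 2) := by
  have hint := (integrable_abs_pow_mul_exp_neg_mul_sq k (half_pos hb)).mul_const
    (exp (-(b / 2) * Y ^ 2))
  have hbound : ∀ y ∈ (Set.Ioc (-Y) Y)ᶜ, ‖gaussianOsc b k φ y‖ ≤
      |y| ^ k * exp (-(b / 2) * y ^ 2) * exp (-(b / 2) * Y ^ 2) := by
    intro y hy
    have hYy : Y ^ 2 ≤ y ^ 2 := by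
      rw [Set.mem_compl_iff, Set.mem_Ioc, not_and_or, not_lt, not_le] at hy
      rcases hy with hy | hy <;> nlinarith
    refine (norm_ofReal_le (hreal y)).trans ?_
    rw [mul_assoc, ← exp_add]
    gcongr
    nlinarith
  calc ‖∫ y in (Set.Ioc (-Y) Y)ᶜ, gaussianOsc b k φ y‖
      ≤ ∫ y in (Set.Ioc (-Y) Y)ᶜ, |y| ^ k * exp (-(b / 2) * y ^ 2) * exp (-(b / 2) * Y ^ 2) :=
        norm_integral_le_of_norm_le hint.integrableOn
          ((ae_restrict_iff' measurableSet_Ioc.compl).mpr (.of_forall hbound))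
    _ ≤ ∫ y : ℝ, |y| ^ k * exp (-(b / 2) * y ^ 2) * exp (-(b / 2) * Y ^ 2) :=
        setIntegral_le_integral hint (.of_forall fun y => by positivity)
    _ = _ := integral_mul_const _ _

/-- The constant in the contour bound for `∫ yᵏ e^{-by²} e^{iφ(y)} dy`: the first summand comes from
the shifted contour and its vertical sides, the second from the tails of the real line. -/
noncomputable def boundConst (b : ℝ) (k : ℕ) : ℝ :=
  2 * exp b + ∫ y : ℝ, |y| ^ k * exp (-(b / 2) * y ^ 2)

theorem boundConst_nonneg (b : ℝ) (k : ℕ) : 0 ≤ boundConst b k :=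
  add_nonneg (by positivity) (integral_nonneg fun y => by positivity)

theorem norm_integral_le (hb : 0 < b) (hφ : Differentiable ℂ φ) (hreal : ∀ y : ℝ, 0 ≤ (φ y).im)
    (hc : 0 ≤ c) (hY : 0 ≤ Y)
    (him : ∀ y s : ℝ, |y| ≤ Y → 0 ≤ s → s ≤ 1 → c * s ≤ (φ (y + s * Complex.I)).im) :
    ‖∫ y : ℝ, gaussianOsc b k φ y‖ ≤
      boundConst b k * ((Y + 1) ^ (k + 1) * (exp (-c) + exp (-(b / 2) * Y ^ 2))) := by
  have hsegment : ‖∫ y in Set.Ioc (-Y) Y, gaussianOsc b k φ y‖ ≤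
      2 * exp b * ((Y + 1) ^ (k + 1) * (exp (-c) + exp (-(b / 2) * Y ^ 2))) := by
    rw [← intervalIntegral.integral_of_le (by linarith), ← mul_assoc]
    refine (norm_intervalIntegral_le hb.le hφ hc hY him).trans ?_
    gcongr
    linarith
  have htail : exp (-(b / 2) * Y ^ 2) ≤
      (Y + 1) ^ (k + 1) * (exp (-c) + exp (-(b / 2) * Y ^ 2)) :=
    (le_add_of_nonneg_left (exp_pos _).le).trans
      (le_mul_of_one_le_left (by positivity) (one_le_pow₀ (by linarith)))
  rw [← integral_add_compl measurableSet_Ioc (integrable_ofReal hb hφ hreal), boundConst, add_mul]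
  refine (norm_add_le _ _).trans (add_le_add hsegment ?_)
  refine (norm_setIntegral_compl_Ioc_le hb hreal hY).trans ?_
  gcongr

theorem re_ofReal {y t : ℝ} (ht : φ y = t) :
    (gaussianOsc b k φ y).re = cos t * (y ^ k * exp (-b * y ^ 2)) := by
  have h : gaussianOsc b k φ y = ((y ^ k * exp (-b * y ^ 2) : ℝ) : ℂ) *
      Complex.exp ((t : ℂ) * Complex.I) := by
    rw [gaussianOsc, Complex.exp_add, ht, mul_comm Complex.I]
    push_cast
    ring
  rw [h, Complex.re_ofReal_mul, Complex.exp_ofReal_mul_I_re, mul_comm]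

theorem integrable_cos_mul (hb : 0 < b) (hφ : Differentiable ℂ φ) (hψ : ∀ y : ℝ, φ y = ψ y) :
    Integrable fun y : ℝ => cos (ψ y) * (y ^ k * exp (-b * y ^ 2)) := by
  simp only [← re_ofReal (hψ _)]
  exact (integrable_ofReal hb hφ fun y => by simp [hψ]).re

theorem abs_integral_cos_mul_le (hb : 0 < b) (hφ : Differentiable ℂ φ)
    (hψ : ∀ y : ℝ, φ y = ψ y) :
    |∫ y : ℝ, cos (ψ y) * (y ^ k * exp (-b * y ^ 2))| ≤ ‖∫ y : ℝ, gaussianOsc b k φ y‖ := by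
  simp only [← re_ofReal (hψ _)]
  exact (congrArg abs (integral_re (integrable_ofReal hb hφ fun y => by simp [hψ]))).trans_le
    (Complex.abs_re_le_norm _)

end gaussianOsc

section GaussianFourier

variable {b : ℂ}

theorem integrable_mul_cexp_quadratic (hb : b.re < 0) (c d : ℂ) :
    Integrable fun u : ℝ => (u : ℂ) * Complex.exp (b * u ^ 2 + c * u + d) := by
  refine ((integrable_cexp_quadratic' hb (c + 1) d).norm.add
    (integrable_cexp_quadratic' hb (c - 1) d).norm).mono' (by fun_prop) (.of_forall fun u => ?_)
  have hsplit (r : ℝ) : ‖Complex.exp (b * u ^ 2 + (c + r) * u + d)‖ =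
      exp (r * u) * ‖Complex.exp (b * u ^ 2 + c * u + d)‖ := by
    rw [show b * u ^ 2 + (c + r) * u + d = ((r * u : ℝ) : ℂ) + (b * u ^ 2 + c * u + d) by
      push_cast; ring, Complex.exp_add, norm_mul, Complex.norm_exp_ofReal]
  have habs : |u| ≤ exp u + exp (-u) := by
    linarith [add_one_le_exp |u|, exp_abs_le u]
  have h₁ := hsplit 1
  have h₂ := hsplit (-1)
  push_cast [← sub_eq_add_neg] at h₁ h₂
  rw [Pi.add_apply, h₁, h₂, ← add_mul, norm_mul, Complex.norm_real, norm_eq_abs, one_mul,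
    neg_one_mul]
  gcongr

theorem integral_mul_cexp_quadratic (hb : b.re < 0) (c d : ℂ) :
    ∫ u : ℝ, (u : ℂ) * Complex.exp (b * u ^ 2 + c * u + d) =
      -(c / (2 * b)) * ∫ u : ℝ, Complex.exp (b * u ^ 2 + c * u + d) := by
  have hb₀ : b ≠ 0 := by
    rintro rfl
    simp at hb
  have hint := integrable_cexp_quadratic' hb c d
  have hmul := integrable_mul_cexp_quadratic hb c d
  have hderiv (u : ℝ) : HasDerivAt (fun u : ℝ => Complex.exp (b * u ^ 2 + c * u + d))
      (2 * b * (u * Complex.exp (b * u ^ 2 + c * u + d)) +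
        c * Complex.exp (b * u ^ 2 + c * u + d)) u := by
    have h := ((((hasDerivAt_pow 2 (u : ℂ)).const_mul b).add
      ((hasDerivAt_id (u : ℂ)).const_mul c)).add_const d).cexp.comp_ofReal
    refine h.congr_deriv ?_
    simp only [id_eq, Pi.add_apply]
    push_cast
    ring
  have hzero := integral_eq_zero_of_hasDerivAt_of_integrable hderiv
    ((hmul.const_mul _).add (hint.const_mul _)) hint
  rw [integral_add (hmul.const_mul _) (hint.const_mul _), integral_const_mul,
    integral_const_mul] at hzero
  rw [neg_mul, div_mul_eq_mul_div, ← neg_div, eq_div_iff (by simp [hb₀])]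
  linear_combination hzero

theorem integral_gaussian_mul_affine_mul_cexp (G T y : ℝ) :
    ∫ u : ℝ, (↑(exp (-u ^ 2) * (G * u + T)) : ℂ) * Complex.exp (2 * π * Complex.I * y * u) =
      ((√π * exp (-π ^ 2 * y ^ 2) : ℝ) : ℂ) * (T + Complex.I * (π * G * y)) := by
  have hb : (-1 : ℂ).re < 0 := by simp
  have hgauss : ∫ u : ℝ, Complex.exp (-1 * u ^ 2 + 2 * π * Complex.I * y * u + 0) =
      ((√π * exp (-π ^ 2 * y ^ 2) : ℝ) : ℂ) := by
    rw [integral_cexp_quadratic hb, sqrt_eq_rpow, Complex.ofReal_mul,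
      Complex.ofReal_cpow pi_pos.le, Complex.ofReal_exp]
    congr 2
    · simp
    · simp
    · push_cast
      linear_combination (π : ℂ) ^ 2 * y ^ 2 * Complex.I_sq
  have hintegrand (u : ℝ) : (↑(exp (-u ^ 2) * (G * u + T)) : ℂ) *
        Complex.exp (2 * π * Complex.I * y * u) =
      G * (u * Complex.exp (-1 * u ^ 2 + 2 * π * Complex.I * y * u + 0)) +
        T * Complex.exp (-1 * u ^ 2 + 2 * π * Complex.I * y * u + 0) := by
    rw [add_zero, Complex.exp_add]
    push_cast
    ring_nf
  simp only [hintegrand]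
  rw [integral_add ((integrable_mul_cexp_quadratic hb _ _).const_mul _)
      ((integrable_cexp_quadratic' hb _ _).const_mul _), integral_const_mul, integral_const_mul,
    integral_mul_cexp_quadratic hb, hgauss]
  ring

end GaussianFourier

theorem norm_integral_cos_mul_fourier_gaussian_le {φ : ℂ → ℂ} {ψ : ℝ → ℝ}
    (hφ : Differentiable ℂ φ) (hψ : ∀ y : ℝ, φ y = ψ y) (G T : ℝ) :
    ‖∫ y : ℝ, (↑(cos (ψ y)) : ℂ) * ∫ u : ℝ, (↑(exp (-u ^ 2) * (G * u + T)) : ℂ) *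
        Complex.exp (2 * π * Complex.I * y * u)‖ ≤
      √π * (|T| * ‖∫ y : ℝ, gaussianOsc (π ^ 2) 0 φ y‖ +
        π * |G| * ‖∫ y : ℝ, gaussianOsc (π ^ 2) 1 φ y‖) := by
  have hb : 0 < π ^ 2 := by positivity
  have hintegrand (y : ℝ) : (↑(cos (ψ y)) : ℂ) *
        (∫ u : ℝ, (↑(exp (-u ^ 2) * (G * u + T)) : ℂ) *
          Complex.exp (2 * π * Complex.I * y * u)) =
      √π * T * ((cos (ψ y) * (y ^ 0 * exp (-π ^ 2 * y ^ 2)) : ℝ) : ℂ) +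
        √π * (π * G) * Complex.I * ((cos (ψ y) * (y ^ 1 * exp (-π ^ 2 * y ^ 2)) : ℝ) : ℂ) := by
    rw [integral_gaussian_mul_affine_mul_cexp]
    push_cast
    ring
  have hint (k : ℕ) : Integrable fun y : ℝ =>
      ((cos (ψ y) * (y ^ k * exp (-π ^ 2 * y ^ 2)) : ℝ) : ℂ) :=
    (gaussianOsc.integrable_cos_mul hb hφ hψ).ofReal
  have hosc (k : ℕ) := gaussianOsc.abs_integral_cos_mul_le (k := k) hb hφ hψ
  rw [integral_congr_ae (.of_forall hintegrand), integral_add ((hint 0).const_mul _)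
      ((hint 1).const_mul _), integral_const_mul, integral_const_mul, integral_complex_ofReal,
    integral_complex_ofReal]
  refine (norm_add_le _ _).trans ?_
  simp only [norm_mul, Complex.norm_real, Complex.norm_I, mul_one, norm_eq_abs,
    abs_of_nonneg (sqrt_nonneg π), abs_of_pos pi_pos]
  rw [mul_add, mul_assoc, mul_assoc]
  gcongr
  exacts [hosc 0, hosc 1]

theorem norm_integral_cos_mul_fourier_gaussian_le_exp {φ : ℂ → ℂ} {ψ : ℝ → ℝ} {c Y : ℝ}
    (hφ : Differentiable ℂ φ) (hψ : ∀ y : ℝ, φ y = ψ y) (hc : 0 ≤ c) (hY : 0 ≤ Y)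
    (him : ∀ y s : ℝ, |y| ≤ Y → 0 ≤ s → s ≤ 1 → c * s ≤ (φ (y + s * Complex.I)).im) (G T : ℝ) :
    ‖∫ y : ℝ, (↑(cos (ψ y)) : ℂ) * ∫ u : ℝ, (↑(exp (-u ^ 2) * (G * u + T)) : ℂ) *
        Complex.exp (2 * π * Complex.I * y * u)‖ ≤
      √π * (gaussianOsc.boundConst (π ^ 2) 0 + π * gaussianOsc.boundConst (π ^ 2) 1) *
        (|T| + |G|) * ((Y + 1) ^ 2 * (exp (-c) + exp (-(π ^ 2 / 2) * Y ^ 2))) := by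
  set E := exp (-c) + exp (-(π ^ 2 / 2) * Y ^ 2)
  have hK (k : ℕ) := gaussianOsc.boundConst_nonneg (π ^ 2) k
  have hosc : ∀ k ≤ 1, ‖∫ y : ℝ, gaussianOsc (π ^ 2) k φ y‖ ≤
      gaussianOsc.boundConst (π ^ 2) k * ((Y + 1) ^ 2 * E) := fun k hk =>
    calc ‖∫ y : ℝ, gaussianOsc (π ^ 2) k φ y‖
        ≤ gaussianOsc.boundConst (π ^ 2) k * ((Y + 1) ^ (k + 1) * E) :=
          gaussianOsc.norm_integral_le (by positivity) hφ (fun y => by simp [hψ]) hc hY him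
      _ ≤ gaussianOsc.boundConst (π ^ 2) k * ((Y + 1) ^ 2 * E) := by
          gcongr
          exacts [hK k, by linarith, by lia]
  calc _ ≤ _ := norm_integral_cos_mul_fourier_gaussian_le hφ hψ G T
    _ ≤ √π * ((|T| + |G|) * (gaussianOsc.boundConst (π ^ 2) 0 * ((Y + 1) ^ 2 * E)) +
          π * (|T| + |G|) * (gaussianOsc.boundConst (π ^ 2) 1 * ((Y + 1) ^ 2 * E))) := by
        gcongr
        · exact le_add_of_nonneg_right (abs_nonneg G)
        · exact hosc 0 zero_le_one
        · exact le_add_of_nonneg_left (abs_nonneg T)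
        · exact hosc 1 le_rfl
    _ = _ := by ring

theorem abs_sinh_le_two_mul_abs {t : ℝ} (ht : |t| ≤ 1) : |sinh t| ≤ 2 * |t| := by
  have h₁ := abs_exp_sub_one_le ht
  have h₂ := abs_exp_sub_one_le (x := -t) (by rwa [abs_neg])
  rw [abs_neg] at h₂
  rw [sinh_eq]
  rw [abs_le] at h₁ h₂ ⊢
  constructor <;> linarith [h₁.1, h₁.2, h₂.1, h₂.2]

/-- The phase `αz + x cosh βz` of the Bessel transform, continued to `ℂ`; in the application
`α = 2πT/G` and `β = π/G`. -/
noncomputable def coshPhase (α β x : ℝ) (z : ℂ) : ℂ :=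
  α * z + x * Complex.cosh (β * z)

namespace coshPhase

variable {α β x Y y s : ℝ}

theorem differentiable (α β x : ℝ) : Differentiable ℂ (coshPhase α β x) := by
  unfold coshPhase
  fun_prop

theorem im_add_mul_I (α β x y s : ℝ) :
    (coshPhase α β x (y + s * Complex.I)).im = α * s + x * (sinh (β * y) * sin (β * s)) := by
  have hcosh : Complex.cosh (β * (y + s * Complex.I)) =
      ((cosh (β * y) * cos (β * s) : ℝ) : ℂ) +
        ((sinh (β * y) * sin (β * s) : ℝ) : ℂ) * Complex.I := by
    rw [mul_add, ← mul_assoc, Complex.cosh_add, Complex.cosh_mul_I, Complex.sinh_mul_I]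
    push_cast
    ring
  rw [coshPhase, hcosh]
  simp only [Complex.add_im, Complex.im_ofReal_mul, Complex.ofReal_im, Complex.I_im, mul_one,
    zero_add]

theorem half_mul_le_im_add_mul_I (hβY : |β| * Y ≤ 1) (hxY : 4 * |x| * β ^ 2 * Y ≤ α)
    (hy : |y| ≤ Y) (hs : 0 ≤ s) : α / 2 * s ≤ (coshPhase α β x (y + s * Complex.I)).im := by
  have hβy : |β * y| ≤ |β| * Y := by
    rw [abs_mul]
    gcongr
  have hY : 0 ≤ Y := (abs_nonneg y).trans hy
  have hsinh : |sinh (β * y)| ≤ 2 * (|β| * Y) :=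
    (abs_sinh_le_two_mul_abs (hβy.trans hβY)).trans (by gcongr)
  have hsin : |sin (β * s)| ≤ |β| * s := by
    simpa [abs_mul, abs_of_nonneg hs] using abs_sin_le_abs (x := β * s)
  have hdominated : |x * (sinh (β * y) * sin (β * s))| ≤ α / 2 * s :=
    calc |x * (sinh (β * y) * sin (β * s))|
        = |x| * (|sinh (β * y)| * |sin (β * s)|) := by rw [abs_mul, abs_mul]
      _ ≤ |x| * (2 * (|β| * Y) * (|β| * s)) := by gcongr
      _ = 4 * |x| * |β| ^ 2 * Y / 2 * s := by ring
      _ ≤ α / 2 * s := by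
          rw [sq_abs]
          gcongr
  rw [im_add_mul_I]
  linarith [neg_le_of_abs_le hdominated]

end coshPhase

section Asymptotics

open Filter

theorem eventually_const_mul_rpow_le_rpow (C : ℝ) {r s : ℝ} (hrs : r < s) :
    ∀ᶠ T : ℝ in atTop, C * T ^ r ≤ T ^ s := by
  filter_upwards [(tendsto_rpow_atTop (sub_pos.mpr hrs)).eventually_ge_atTop C,
    eventually_gt_atTop 0] with T hC hT
  calc C * T ^ r ≤ T ^ (s - r) * T ^ r := by gcongr
    _ = T ^ s := by rw [← rpow_add hT, sub_add_cancel]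

theorem eventually_const_mul_rpow_mul_exp_neg_rpow_le (C r s : ℝ) {δ : ℝ} (hδ : 0 < δ) :
    ∀ᶠ T : ℝ in atTop, C * T ^ r * exp (-T ^ δ) ≤ T ^ s := by
  have hexp := ((isLittleO_exp_neg_mul_rpow_atTop one_pos ((s - r - 1) / δ)).comp_tendsto
    (tendsto_rpow_atTop hδ)).bound one_pos
  filter_upwards [hexp, eventually_ge_atTop |C|, eventually_gt_atTop 0] with T hexp hC hT
  have hexp' : exp (-T ^ δ) ≤ T ^ (s - r - 1) := by
    simpa [← rpow_mul hT.le, mul_div_cancel₀ _ hδ.ne', abs_rpow_of_nonneg hT.le,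
      abs_of_pos hT] using hexp
  calc C * T ^ r * exp (-T ^ δ) ≤ T ^ (1 : ℝ) * T ^ r * T ^ (s - r - 1) := by
        rw [rpow_one]
        gcongr
        exact (le_abs_self C).trans hC
    _ = T ^ s := by
        rw [← rpow_add hT, ← rpow_add hT]
        ring_nf

theorem eventually_four_mul_abs_mul_sq_le (θ : ℝ) {ε η : ℝ} (hη : η < ε) :
    ∀ᶠ T : ℝ in atTop, ∀ x : ℝ, |x| ≤ T ^ θ * T ^ (1 - ε) →
      4 * |x| * (π / T ^ θ) ^ 2 * T ^ η ≤ 2 * π * T / T ^ θ := by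
  filter_upwards [eventually_const_mul_rpow_le_rpow (2 * π) hη, eventually_gt_atTop 0]
    with T hTη hT x hx
  calc 4 * |x| * (π / T ^ θ) ^ 2 * T ^ η
      ≤ 4 * (T ^ θ * T ^ (1 - ε)) * (π / T ^ θ) ^ 2 * T ^ η := by gcongr
    _ = 2 * π * (T ^ (1 - ε) * (2 * π * T ^ η)) / T ^ θ := by
        field_simp
        ring
    _ ≤ 2 * π * (T ^ (1 - ε) * T ^ ε) / T ^ θ := by gcongr
    _ = 2 * π * T / T ^ θ := by rw [← rpow_add hT, sub_add_cancel, rpow_one]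

theorem exp_add_exp_le_two_mul_exp_neg_rpow {T θ δ : ℝ} (hT : 1 ≤ T) (hδ : δ ≤ 1 - θ) :
    exp (-(2 * π * T / T ^ θ / 2)) + exp (-(π ^ 2 / 2) * (T ^ (δ / 2)) ^ 2) ≤
      2 * exp (-T ^ δ) := by
  have hT₀ : 0 < T := one_pos.trans_le hT
  have hα : T ^ δ ≤ 2 * π * T / T ^ θ / 2 :=
    calc T ^ δ ≤ 1 * T ^ (1 - θ) := by
          rw [one_mul]
          exact rpow_le_rpow_of_exponent_le hT hδ
      _ ≤ π * T ^ (1 - θ) := by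
          gcongr
          linarith [pi_gt_three]
      _ = 2 * π * T / T ^ θ / 2 := by
          rw [rpow_sub hT₀, rpow_one]
          ring
  have hY : T ^ δ ≤ π ^ 2 / 2 * (T ^ (δ / 2)) ^ 2 := by
    rw [← rpow_mul_natCast hT₀.le, Nat.cast_ofNat, div_mul_cancel₀ δ two_ne_zero]
    exact le_mul_of_one_le_left (by positivity) (by nlinarith [pi_gt_three])
  rw [two_mul (exp _), neg_mul]
  gcongr

theorem eventually_const_mul_contour_error_le {C θ δ : ℝ} (A : ℝ) (hC : 0 ≤ C) (hθ : 0 ≤ θ)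
    (hδ₀ : 0 < δ) (hδ : δ ≤ 1 - θ) :
    ∀ᶠ T : ℝ in atTop, C * (|T| + |T ^ θ|) * ((T ^ (δ / 2) + 1) ^ 2 *
      (exp (-(2 * π * T / T ^ θ / 2)) + exp (-(π ^ 2 / 2) * (T ^ (δ / 2)) ^ 2))) ≤ T ^ (-A) := by
  filter_upwards [eventually_const_mul_rpow_mul_exp_neg_rpow_le (16 * C) 3 (-A) hδ₀,
    eventually_ge_atTop 1] with T hdecay hT
  have hT₀ : 0 < T := one_pos.trans_le hT
  have hle {r : ℝ} (hr : r ≤ 1) : T ^ r ≤ T := by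
    simpa using rpow_le_rpow_of_exponent_le hT hr
  calc _ ≤ C * (T + T) * ((T + T) ^ 2 * (2 * exp (-T ^ δ))) := by
        rw [abs_of_pos hT₀, abs_of_pos (rpow_pos_of_pos hT₀ θ)]
        gcongr
        · exact hle (by linarith)
        · exact hle (by linarith)
        · exact exp_add_exp_le_two_mul_exp_neg_rpow hT hδ
    _ = 16 * C * T ^ (3 : ℝ) * exp (-T ^ δ) := by
        norm_cast
        ring
    _ ≤ T ^ (-A) := hdecay

theorem rpow_neg_le_mul_max_rpow {T θ A : ℝ} (hT : 1 ≤ T) (hθ : 0 ≤ θ) (hA : 0 ≤ A) :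
    T ^ (-A) ≤ T ^ θ * max (T ^ θ / T) (1 / T ^ θ) ^ A := by
  have hT₀ : 0 < T := one_pos.trans_le hT
  have hG : 1 ≤ T ^ θ := one_le_rpow hT hθ
  have hmax : T⁻¹ ≤ max (T ^ θ / T) (1 / T ^ θ) := by
    rw [inv_eq_one_div]
    exact le_max_of_le_left (by gcongr)
  calc T ^ (-A) = T⁻¹ ^ A := by rw [rpow_neg hT₀.le, inv_rpow hT₀.le]
    _ ≤ max (T ^ θ / T) (1 / T ^ θ) ^ A := by gcongr
    _ ≤ T ^ θ * max (T ^ θ / T) (1 / T ^ θ) ^ A :=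
        le_mul_of_one_le_left (by positivity) hG

theorem stmt_1_general {θ ε : ℝ} (hθ₀ : 0 < θ) (hθ₁ : θ < 1) (hε : 0 < ε) (A : ℝ) :
    ∀ᶠ T : ℝ in atTop, ∀ x : ℝ, |x| ≤ T ^ θ * T ^ (1 - ε) →
      ‖∫ y : ℝ, (↑(cos (2 * π * T * y / T ^ θ + x * cosh (π * y / T ^ θ))) : ℂ) *
          ∫ u : ℝ, (↑(exp (-u ^ 2) * (T ^ θ * u + T)) : ℂ) *
            Complex.exp (2 * π * Complex.I * y * u)‖ ≤ T ^ (-A) := by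
  obtain ⟨δ, hδ₀, hδ⟩ := exists_between (lt_min (sub_pos.mpr hθ₁) (lt_min hθ₀ hε))
  obtain ⟨hδ₁, hδθ, hδε⟩ : δ < 1 - θ ∧ δ < θ ∧ δ < ε := by simpa only [lt_min_iff] using hδ
  have hC : 0 ≤ √π * (gaussianOsc.boundConst (π ^ 2) 0 + π * gaussianOsc.boundConst (π ^ 2) 1) := by
    have hK := gaussianOsc.boundConst_nonneg (π ^ 2)
    exact mul_nonneg (sqrt_nonneg π) (add_nonneg (hK 0) (mul_nonneg pi_pos.le (hK 1)))
  filter_upwards [eventually_gt_atTop 0,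
    eventually_const_mul_rpow_le_rpow π (show δ / 2 < θ by linarith),
    eventually_four_mul_abs_mul_sq_le θ (show δ / 2 < ε by linarith),
    eventually_const_mul_contour_error_le A hC hθ₀.le hδ₀ hδ₁.le] with T hT hβY hxY herror x hx
  have hG : 0 < T ^ θ := rpow_pos_of_pos hT θ
  have hβY' : |π / T ^ θ| * T ^ (δ / 2) ≤ 1 := by
    rwa [abs_of_pos (by positivity), div_mul_eq_mul_div, div_le_one hG]
  have hphase (y : ℝ) : coshPhase (2 * π * T / T ^ θ) (π / T ^ θ) x y =
      ((2 * π * T * y / T ^ θ + x * cosh (π * y / T ^ θ) : ℝ) : ℂ) := by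
    rw [coshPhase, mul_div_right_comm (2 * π * T), mul_div_right_comm π]
    push_cast
    rfl
  exact (norm_integral_cos_mul_fourier_gaussian_le_exp (coshPhase.differentiable _ _ _) hphase
    (by positivity) (by positivity)
    (fun y s hy hs _ => coshPhase.half_mul_le_im_add_mul_I hβY' (hxY x hx) hy hs) _ _).trans herror

end Asymptotics

/-- Fix `1/3 < θ < 1`, `0 < ε < θ`, and set `G = T^θ`.  With
`w(y) = ∫ e^{-u²}(Gu+T) e^{2πiyu} du`, for every `A > 0` there are `C, T₀ > 0`
(depending only on `θ, ε, A`) such that for all `T ≥ T₀` and all `0 < x < G·T^{1-ε}`,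
`|∫ cos(2πTy/G + x·cosh(πy/G))·w(y) dy| ≤ C·G·(max{G/T, 1/G})^A`. -/
theorem stmt_1 (θ ε : ℝ) (hθ₁ : 1 / 3 < θ) (hθ₂ : θ < 1) (hε₁ : 0 < ε) (hε₂ : ε < θ)
    (A : ℝ) (hA : 0 < A) :
    ∃ C T₀ : ℝ, 0 < C ∧ 0 < T₀ ∧ ∀ T : ℝ, T₀ ≤ T → ∀ x : ℝ, 0 < x → x < T ^ θ * T ^ (1 - ε) →
      ‖∫ y : ℝ,
          (↑(Real.cos (2 * Real.pi * T * y / T ^ θ + x * Real.cosh (Real.pi * y / T ^ θ))) : ℂ) *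
            ∫ u : ℝ, (↑(Real.exp (-u ^ 2) * (T ^ θ * u + T)) : ℂ) *
              Complex.exp (2 * Real.pi * Complex.I * y * u)‖
        ≤ C * T ^ θ * max (T ^ θ / T) (1 / T ^ θ) ^ A := by
  obtain ⟨T₀, hT₀⟩ := Filter.eventually_atTop.mp (stmt_1_general (hε₁.trans hε₂) hθ₂ hε₁ A)
  refine ⟨1, max T₀ 1, one_pos, by positivity, fun T hT x hx hxT => ?_⟩
  rw [one_mul]
  exact (hT₀ T (le_of_max_le_left hT) x ((abs_of_pos hx).trans_le hxT.le)).trans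
    (rpow_neg_le_mul_max_rpow (le_of_max_le_right hT) (hε₁.trans hε₂).le hA.le)
end

section
/- For every natural number n ≥ 1 and all constants 0 < κ ≤ K there exists C > 0 (depending only on n, κ, K) with the following property. Let D = [a,b] × [c,d] be a rectangle with a < b and c < d, let λ > 0, and let f be a real-valued function, twice continuously differentiable on an open neighbourhood of D, which is algebraic in the sense that there is a nonzero real polynomial P in three variables of total degree at most n with P(x₁, x₂, f(x₁,x₂)) = 0 for all (x₁,x₂) ∈ D. Assume that throughout D: κλ ≤ |∂²f/∂x₁²| ≤ Kλ, κλ ≤ |∂²f/∂x₂²| ≤ Kλ, |∂²f/∂x₁∂x₂| ≤ Kλ, and |(∂²f/∂x₁²)(∂²f/∂x₂²) − (∂²f/∂x₁∂x₂)²| ≥ κλ². Then |∬_D e^{i f(x₁,x₂)} dx₁ dx₂| ≤ C·(1 + |log(b−a)| + |log(d−c)| + |log λ|)/λ. -/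
/-!
On the rectangle write `e^{iF} = -i div (e^{iF} W) + e^{iF} (1 - ∇F · W + i div W)` with the field
`W = ∇F / (λ + |∇F|²)`. By the divergence theorem the integral of `e^{iF}` is at most
`∫_{∂D} |W| + O(∫_D λ / (λ + |∇F|²))`, so everything reduces to a lower bound for `|∇F|`. It comes
from the fact that `∇F` expands distances by a factor `≫ λ` on the whole rectangle, a quantitative
form of the Gale–Nikaido theorem: after changing the signs of the rows of the Hessian, and swapping
them if necessary, all of its principal minors are positive, with a margin. Hence
`|∇F(z)| ≫ λ|z - p|` where `p` minimizes `|∇F|`, and the remaining integrals are logarithmic.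
-/

open Set Filter Topology MeasureTheory

/-- The linear form `(x, y) ↦ a * x + b * y` on the plane, through which gradients are expressed. -/
noncomputable def planeForm (a b : ℝ) : ℝ × ℝ →L[ℝ] ℝ :=
  a • ContinuousLinearMap.fst ℝ ℝ ℝ + b • ContinuousLinearMap.snd ℝ ℝ ℝ

@[simp]
lemma planeForm_apply (a b : ℝ) (z : ℝ × ℝ) : planeForm a b z = a * z.1 + b * z.2 := by
  simp [planeForm]

/-- `(u, v)` is differentiable at every point of `R`, with Jacobian matrix `(α, β; γ, δ)`. -/
structure HasJacobianOn (u v α β γ δ : ℝ × ℝ → ℝ) (R : Set (ℝ × ℝ)) : Prop where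
  fst : ∀ p ∈ R, HasFDerivAt u (planeForm (α p) (β p)) p
  snd : ∀ p ∈ R, HasFDerivAt v (planeForm (γ p) (δ p)) p

lemma HasJacobianOn.continuousOn_fst {u v α β γ δ : ℝ × ℝ → ℝ} {R : Set (ℝ × ℝ)}
    (h : HasJacobianOn u v α β γ δ R) : ContinuousOn u R :=
  fun p hp => (h.fst p hp).continuousAt.continuousWithinAt

lemma HasJacobianOn.continuousOn_snd {u v α β γ δ : ℝ × ℝ → ℝ} {R : Set (ℝ × ℝ)}
    (h : HasJacobianOn u v α β γ δ R) : ContinuousOn v R :=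
  fun p hp => (h.snd p hp).continuousAt.continuousWithinAt

lemma exists_sub_eq_of_hasFDerivAt_planeForm {u α β : ℝ × ℝ → ℝ} {R : Set (ℝ × ℝ)}
    (hR : Convex ℝ R) (hu : ∀ p ∈ R, HasFDerivAt u (planeForm (α p) (β p)) p)
    {p q : ℝ × ℝ} (hp : p ∈ R) (hq : q ∈ R) :
    ∃ z ∈ R, u q - u p = α z * (q.1 - p.1) + β z * (q.2 - p.2) := by
  obtain ⟨z, hz, h⟩ := domain_mvt (fun x hx => (hu x hx).hasFDerivWithinAt) hR hp hq
  exact ⟨z, hR.segment_subset hp hq hz, by simpa using h⟩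

lemma eventually_lt_along_of_hasFDerivAt {E : Type*} [NormedAddCommGroup E] [NormedSpace ℝ E]
    {f : E → ℝ} {f' : E →L[ℝ] ℝ} {x h : E} (hf : HasFDerivAt f f' x) (hneg : f' h < 0) :
    ∀ᶠ t in 𝓝[>] (0 : ℝ), f (x + t • h) < f x := by
  have hline : HasDerivAt (fun t : ℝ => f (x + t • h)) (f' h) 0 := hf.hasLineDerivAt h
  filter_upwards [hline.hasDerivWithinAt.limsup_slope_le' (self_notMem_Ioi) hneg,
    self_mem_nhdsWithin] with t hslope ht
  have ht : 0 < t := ht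
  rw [slope_def_field, div_lt_iff₀ (by simpa using ht)] at hslope
  simpa using hslope

lemma exists_pos_mulVec_pos_of_pMatrix {α β γ δ : ℝ} (hα : 0 < α) (hδ : 0 < δ)
    (hdet : β * γ < α * δ) :
    ∃ x y : ℝ, 0 < x ∧ 0 < y ∧ 0 < α * x + β * y ∧ 0 < γ * x + δ * y := by
  refine ⟨δ + max (-β) 0, α + max (-γ) 0, by positivity, by positivity, ?_, ?_⟩ <;>
    rcases le_total 0 β with hβ | hβ <;> rcases le_total 0 γ with hγ | hγ <;>
    simp only [hβ, hγ, max_eq_left, max_eq_right, neg_nonneg, neg_nonpos] <;>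
    nlinarith [mul_nonneg hα.le hδ.le]

-- The planar Gale–Nikaido argument: at an interior minimum of `max u v`, moving against a positive
-- vector with positive image under the Jacobian would decrease both `u` and `v`.
lemma HasJacobianOn.max_nonneg_of_pMatrix {u v α β γ δ : ℝ × ℝ → ℝ} {S T : ℝ}
    (h : HasJacobianOn u v α β γ δ (Icc 0 S ×ˢ Icc 0 T))
    (hα : ∀ p ∈ Icc 0 S ×ˢ Icc 0 T, 0 < α p) (hδ : ∀ p ∈ Icc 0 S ×ˢ Icc 0 T, 0 < δ p)
    (hdet : ∀ p ∈ Icc 0 S ×ˢ Icc 0 T, β p * γ p < α p * δ p)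
    (hu₀ : u 0 = 0) (hv₀ : v 0 = 0) {z : ℝ × ℝ} (hz : z ∈ Icc 0 S ×ˢ Icc 0 T) :
    0 ≤ max (u z) (v z) := by
  have hconv : Convex ℝ (Icc 0 S ×ˢ Icc 0 T) := (convex_Icc _ _).prod (convex_Icc _ _)
  have h0 : (0 : ℝ × ℝ) ∈ Icc 0 S ×ˢ Icc 0 T :=
    ⟨⟨le_rfl, hz.1.1.trans hz.1.2⟩, le_rfl, hz.2.1.trans hz.2.2⟩
  obtain ⟨w, hw, hmin⟩ := (isCompact_Icc.prod isCompact_Icc).exists_isMinOn ⟨z, hz⟩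
    (h.continuousOn_fst.sup h.continuousOn_snd)
  refine le_trans ?_ (hmin hz)
  rcases hw.1.1.eq_or_lt with hw₁ | hw₁
  · obtain ⟨ξ, hξ, hvw⟩ := exists_sub_eq_of_hasFDerivAt_planeForm hconv h.snd h0 hw
    simp only [hv₀, Prod.fst_zero, Prod.snd_zero, ← hw₁, sub_zero, mul_zero, zero_add] at hvw
    exact le_max_of_le_right (hvw ▸ mul_nonneg (hδ ξ hξ).le hw.2.1)
  rcases hw.2.1.eq_or_lt with hw₂ | hw₂
  · obtain ⟨ξ, hξ, huw⟩ := exists_sub_eq_of_hasFDerivAt_planeForm hconv h.fst h0 hw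
    simp only [hu₀, Prod.fst_zero, Prod.snd_zero, ← hw₂, sub_zero, mul_zero, add_zero] at huw
    exact le_max_of_le_left (huw ▸ mul_nonneg (hα ξ hξ).le hw.1.1)
  exfalso
  obtain ⟨x, y, hx, hy, hux, hvy⟩ :=
    exists_pos_mulVec_pos_of_pMatrix (hα w hw) (hδ w hw) (hdet w hw)
  have hline : Continuous fun t : ℝ => w + t • (-x, -y) := by fun_prop
  have hpos : ∀ᶠ t in 𝓝[>] (0 : ℝ), 0 < (w + t • (-x, -y)).1 ∧ 0 < (w + t • (-x, -y)).2 :=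
    nhdsWithin_le_nhds ((hline.fst.continuousAt.eventually_const_lt (by simpa using hw₁)).and
      (hline.snd.continuousAt.eventually_const_lt (by simpa using hw₂)))
  have hudec := eventually_lt_along_of_hasFDerivAt (h := (-x, -y)) (h.fst w hw)
    (by simp only [planeForm_apply]; linarith)
  have hvdec := eventually_lt_along_of_hasFDerivAt (h := (-x, -y)) (h.snd w hw)
    (by simp only [planeForm_apply]; linarith)
  obtain ⟨t, hut, hvt, ⟨ht₁, ht₂⟩, ht⟩ :=
    (hudec.and (hvdec.and (hpos.and self_mem_nhdsWithin))).exists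
  have htx : 0 < t * x := mul_pos ht hx
  have hty : 0 < t * y := mul_pos ht hy
  have hmem : w + t • (-x, -y) ∈ Icc 0 S ×ˢ Icc 0 T := by
    refine ⟨⟨ht₁.le, ?_⟩, ht₂.le, ?_⟩ <;> simp <;> linarith [hw.1.2, hw.2.2]
  exact (max_lt_max hut hvt).not_ge (hmin hmem)

lemma HasJacobianOn.reflect {u v α β γ δ : ℝ × ℝ → ℝ} {Q R : Set (ℝ × ℝ)} {p : ℝ × ℝ} {σ τ : ℝ}
    (h : HasJacobianOn u v α β γ δ R) (hσ : σ * σ = 1) (hτ : τ * τ = 1)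
    (hmaps : MapsTo (fun z : ℝ × ℝ => (p.1 + σ * z.1, p.2 + τ * z.2)) Q R) :
    HasJacobianOn (fun z => σ * (u (p.1 + σ * z.1, p.2 + τ * z.2) - u p))
      (fun z => τ * (v (p.1 + σ * z.1, p.2 + τ * z.2) - v p))
      (fun z => α (p.1 + σ * z.1, p.2 + τ * z.2))
      (fun z => σ * τ * β (p.1 + σ * z.1, p.2 + τ * z.2))
      (fun z => σ * τ * γ (p.1 + σ * z.1, p.2 + τ * z.2))
      (fun z => δ (p.1 + σ * z.1, p.2 + τ * z.2)) Q := by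
  have hΦ (z : ℝ × ℝ) := ((hasFDerivAt_fst (𝕜 := ℝ) (p := z)).const_mul σ |>.const_add p.1).prodMk
    ((hasFDerivAt_snd (𝕜 := ℝ) (p := z)).const_mul τ |>.const_add p.2)
  constructor <;> intro z hz
  · refine ((((h.fst _ (hmaps hz)).comp z (hΦ z)).sub_const (u p)).const_mul σ).congr_fderiv ?_
    ext
    · simpa using by linear_combination (α (p.1 + σ * z.1, p.2 + τ * z.2)) * hσ
    · simpa using by ring
  · refine ((((h.snd _ (hmaps hz)).comp z (hΦ z)).sub_const (v p)).const_mul τ).congr_fderiv ?_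
    ext
    · simpa using by ring
    · simpa using by linear_combination (δ (p.1 + σ * z.1, p.2 + τ * z.2)) * hτ

lemma HasJacobianOn.sub_const_mul_add {u v α β γ δ : ℝ × ℝ → ℝ} {R : Set (ℝ × ℝ)}
    (h : HasJacobianOn u v α β γ δ R) (ε : ℝ) :
    HasJacobianOn (fun z => u z - ε * (z.1 + z.2)) (fun z => v z - ε * (z.1 + z.2))
      (fun z => α z - ε) (fun z => β z - ε) (fun z => γ z - ε) (fun z => δ z - ε) R := by
  have hsum (z : ℝ × ℝ) : HasFDerivAt (fun z : ℝ × ℝ => ε * (z.1 + z.2)) (planeForm ε ε) z :=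
    ((hasFDerivAt_fst.add hasFDerivAt_snd).const_mul ε).congr_fderiv (by ext <;> simp)
  constructor <;> intro z hz
  · exact ((h.fst z hz).sub (hsum z)).congr_fderiv (by ext <;> simp)
  · exact ((h.snd z hz).sub (hsum z)).congr_fderiv (by ext <;> simp)

lemma abs_mul_of_mul_self_eq_one {s : ℝ} (hs : s * s = 1) (x : ℝ) : |s * x| = |x| :=
  abs_eq_abs.2 (mul_self_eq_mul_self_iff.1 (by linear_combination x * x * hs))

lemma mul_le_abs_of_mul_self_eq_one {s : ℝ} (hs : s * s = 1) (x : ℝ) : s * x ≤ |x| :=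
  (le_abs_self _).trans_eq (abs_mul_of_mul_self_eq_one hs x)

lemma sub_mul_sub_lt_of_mul_add_abs_lt {α β γ δ ε s : ℝ} (hε : 0 ≤ ε) (hs : s * s = 1)
    (h : ε * (α + |β| + |γ| + δ) < α * δ - β * γ) :
    (s * β - ε) * (s * γ - ε) < (α - ε) * (δ - ε) := by
  have hβ : -|β| ≤ s * β := neg_le.1 (by simpa using mul_le_abs_of_mul_self_eq_one hs (-β))
  have hγ : -|γ| ≤ s * γ := neg_le.1 (by simpa using mul_le_abs_of_mul_self_eq_one hs (-γ))
  have hβγ : s * β * (s * γ) = β * γ := by linear_combination β * γ * hs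
  nlinarith [mul_le_mul_of_nonneg_left hβ hε, mul_le_mul_of_nonneg_left hγ hε]

lemma exists_sign_forall_add_mul_mem_uIcc (x y : ℝ) :
    ∃ σ : ℝ, σ * σ = 1 ∧ x + σ * |y - x| = y ∧ ∀ t ∈ Icc 0 |y - x|, x + σ * t ∈ uIcc x y := by
  rcases le_total x y with hxy | hxy
  · rw [abs_of_nonneg (sub_nonneg.2 hxy), uIcc_of_le hxy]
    exact ⟨1, by ring, by ring, fun t ht => ⟨by linarith [ht.1], by linarith [ht.2]⟩⟩
  · rw [abs_of_nonpos (sub_nonpos.2 hxy), uIcc_of_ge hxy]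
    exact ⟨-1, by ring, by ring, fun t ht => ⟨by linarith [ht.2], by linarith [ht.1]⟩⟩

lemma HasJacobianOn.mul_dist_le_of_diag_pos {u v α β γ δ : ℝ × ℝ → ℝ} {a b c d ε : ℝ}
    (h : HasJacobianOn u v α β γ δ (Icc a b ×ˢ Icc c d)) (hε : 0 ≤ ε)
    (hα : ∀ p ∈ Icc a b ×ˢ Icc c d, ε < α p) (hδ : ∀ p ∈ Icc a b ×ˢ Icc c d, ε < δ p)
    (hdet : ∀ p ∈ Icc a b ×ˢ Icc c d,
      ε * (α p + |β p| + |γ p| + δ p) < α p * δ p - β p * γ p)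
    {p q : ℝ × ℝ} (hp : p ∈ Icc a b ×ˢ Icc c d) (hq : q ∈ Icc a b ×ˢ Icc c d) :
    ε * (|q.1 - p.1| + |q.2 - p.2|) ≤ max |u q - u p| |v q - v p| := by
  obtain ⟨σ, hσ, hσq, hσmem⟩ := exists_sign_forall_add_mul_mem_uIcc p.1 q.1
  obtain ⟨τ, hτ, hτq, hτmem⟩ := exists_sign_forall_add_mul_mem_uIcc p.2 q.2
  have hστ : σ * τ * (σ * τ) = 1 := by linear_combination τ * τ * hσ + hτ
  have hmaps : MapsTo (fun z : ℝ × ℝ => (p.1 + σ * z.1, p.2 + τ * z.2))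
      (Icc 0 |q.1 - p.1| ×ˢ Icc 0 |q.2 - p.2|) (Icc a b ×ˢ Icc c d) := fun z hz =>
    ⟨uIcc_subset_Icc hp.1 hq.1 (hσmem _ hz.1), uIcc_subset_Icc hp.2 hq.2 (hτmem _ hz.2)⟩
  have hmax := ((h.reflect hσ hτ hmaps).sub_const_mul_add ε).max_nonneg_of_pMatrix
    (fun z hz => sub_pos.2 (hα _ (hmaps hz))) (fun z hz => sub_pos.2 (hδ _ (hmaps hz)))
    (fun z hz => sub_mul_sub_lt_of_mul_add_abs_lt hε hστ (hdet _ (hmaps hz)))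
    (by simp) (by simp)
    (z := (|q.1 - p.1|, |q.2 - p.2|)) ⟨⟨abs_nonneg _, le_rfl⟩, abs_nonneg _, le_rfl⟩
  simp only [hσq, hτq, le_max_iff, sub_nonneg] at hmax ⊢
  exact hmax.imp (fun hu => hu.trans (mul_le_abs_of_mul_self_eq_one hσ _))
    fun hv => hv.trans (mul_le_abs_of_mul_self_eq_one hτ _)

lemma exists_sign_forall_mul_eq_abs {X : Type*} [TopologicalSpace X] {s : Set X} {g : X → ℝ}
    (hs : IsPreconnected s) (hg : ContinuousOn g s) (hne : ∀ x ∈ s, g x ≠ 0) :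
    ∃ τ : ℝ, τ * τ = 1 ∧ ∀ x ∈ s, τ * g x = |g x| := by
  rcases hs.eq_or_eq_neg_of_sq_eq (f := fun x => |g x|) hg.abs hg (fun x _ => sq_abs (g x))
    (fun {x} hx => hne x hx) with h | h
  · exact ⟨1, by ring, fun x hx => by simpa using (h hx).symm⟩
  · exact ⟨-1, by ring, fun x hx => by simpa using (h hx).symm⟩

lemma HasJacobianOn.mul_dist_le_of_diag_mul_det_pos {u v α β γ δ : ℝ × ℝ → ℝ} {a b c d ε : ℝ}
    (h : HasJacobianOn u v α β γ δ (Icc a b ×ˢ Icc c d)) (hε : 0 ≤ ε)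
    (hαc : ContinuousOn α (Icc a b ×ˢ Icc c d)) (hδc : ContinuousOn δ (Icc a b ×ˢ Icc c d))
    (hα : ∀ p ∈ Icc a b ×ˢ Icc c d, ε < |α p|) (hδ : ∀ p ∈ Icc a b ×ˢ Icc c d, ε < |δ p|)
    (hsign : ∀ p ∈ Icc a b ×ˢ Icc c d, 0 < α p * δ p * (α p * δ p - β p * γ p))
    (hdet : ∀ p ∈ Icc a b ×ˢ Icc c d,
      ε * (|α p| + |β p| + |γ p| + |δ p|) < |α p * δ p - β p * γ p|)
    {p q : ℝ × ℝ} (hp : p ∈ Icc a b ×ˢ Icc c d) (hq : q ∈ Icc a b ×ˢ Icc c d) :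
    ε * (|q.1 - p.1| + |q.2 - p.2|) ≤ max |u q - u p| |v q - v p| := by
  have hconn : IsPreconnected (Icc a b ×ˢ Icc c d) := isPreconnected_Icc.prod isPreconnected_Icc
  obtain ⟨σ, hσ, hσα⟩ := exists_sign_forall_mul_eq_abs hconn hαc
    fun p hp => abs_pos.1 (hε.trans_lt (hα p hp))
  obtain ⟨τ, hτ, hτδ⟩ := exists_sign_forall_mul_eq_abs hconn hδc
    fun p hp => abs_pos.1 (hε.trans_lt (hδ p hp))
  have hστ : σ * τ * (σ * τ) = 1 := by linear_combination τ * τ * hσ + hτ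
  have hJ : HasJacobianOn (fun z => σ * u z) (fun z => τ * v z) (fun z => σ * α z)
      (fun z => σ * β z) (fun z => τ * γ z) (fun z => τ * δ z) (Icc a b ×ˢ Icc c d) := by
    constructor <;> intro z hz
    · exact ((h.fst z hz).const_mul σ).congr_fderiv (by ext <;> simp)
    · exact ((h.snd z hz).const_mul τ).congr_fderiv (by ext <;> simp)
  have hdet' : ∀ z ∈ Icc a b ×ˢ Icc c d,
      |α z * δ z - β z * γ z| = σ * α z * (τ * δ z) - σ * β z * (τ * γ z) := by
    intro z hz
    have hdiag : 0 < σ * α z * (τ * δ z) := by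
      rw [hσα z hz, hτδ z hz]
      exact mul_pos (hε.trans_lt (hα z hz)) (hε.trans_lt (hδ z hz))
    have hpos : 0 < σ * τ * (α z * δ z - β z * γ z) := by
      refine pos_of_mul_pos_right (a := σ * α z * (τ * δ z))
        ((hsign z hz).trans_eq ?_) hdiag.le
      linear_combination
        -(α z * δ z * (α z * δ z - β z * γ z)) * (τ * τ * hσ + hτ)
    rw [← abs_mul_of_mul_self_eq_one hστ, abs_of_pos hpos]
    ring
  have key := hJ.mul_dist_le_of_diag_pos hε (fun z hz => (hα z hz).trans_eq (hσα z hz).symm)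
    (fun z hz => (hδ z hz).trans_eq (hτδ z hz).symm)
    (fun z hz => by
      simpa only [abs_mul_of_mul_self_eq_one hσ, abs_mul_of_mul_self_eq_one hτ, hσα z hz, hτδ z hz,
        hdet' z hz] using hdet z hz)
    hp hq
  simpa only [← mul_sub, abs_mul_of_mul_self_eq_one hσ, abs_mul_of_mul_self_eq_one hτ] using key

/-- `F` is a phase on `R` with gradient `(u, v)` and continuous Hessian `(A, B; B, D)`. -/
structure HasHessianOn (F u v A B D : ℝ × ℝ → ℝ) (R : Set (ℝ × ℝ)) : Prop
    extends HasJacobianOn u v A B B D R where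
  grad : ∀ p ∈ R, HasFDerivAt F (planeForm (u p) (v p)) p
  continuousOn_fst_fst : ContinuousOn A R
  continuousOn_fst_snd : ContinuousOn B R
  continuousOn_snd_snd : ContinuousOn D R

/-- The size conditions of the second-derivative test for a Hessian `(A, B; B, D)` on `R`. -/
structure HessianBounds (κ K lam : ℝ) (A B D : ℝ × ℝ → ℝ) (R : Set (ℝ × ℝ)) : Prop where
  le_fst : ∀ p ∈ R, κ * lam ≤ |A p|
  fst_le : ∀ p ∈ R, |A p| ≤ K * lam
  le_snd : ∀ p ∈ R, κ * lam ≤ |D p|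
  snd_le : ∀ p ∈ R, |D p| ≤ K * lam
  mixed_le : ∀ p ∈ R, |B p| ≤ K * lam
  le_det : ∀ p ∈ R, κ * lam ^ 2 ≤ |A p * D p - B p ^ 2|

section Expansion

variable {F u v A B D : ℝ × ℝ → ℝ} {R S : Set (ℝ × ℝ)} {a b c d κ K lam m : ℝ}

lemma HasHessianOn.mono (h : HasHessianOn F u v A B D R) (hSR : S ⊆ R) :
    HasHessianOn F u v A B D S :=
  ⟨⟨fun p hp => h.fst p (hSR hp), fun p hp => h.snd p (hSR hp)⟩, fun p hp => h.grad p (hSR hp),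
    h.continuousOn_fst_fst.mono hSR, h.continuousOn_fst_snd.mono hSR,
    h.continuousOn_snd_snd.mono hSR⟩

lemma HessianBounds.lt_abs_fst (hb : HessianBounds κ K lam A B D R) (hlam : 0 < lam)
    (hmκ : m < κ) {p : ℝ × ℝ} (hp : p ∈ R) : m * lam < |A p| :=
  (mul_lt_mul_of_pos_right hmκ hlam).trans_le (hb.le_fst p hp)

lemma HessianBounds.lt_abs_snd (hb : HessianBounds κ K lam A B D R) (hlam : 0 < lam)
    (hmκ : m < κ) {p : ℝ × ℝ} (hp : p ∈ R) : m * lam < |D p| :=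
  (mul_lt_mul_of_pos_right hmκ hlam).trans_le (hb.le_snd p hp)

lemma HessianBounds.mul_sum_abs_lt (hb : HessianBounds κ K lam A B D R) (hlam : 0 < lam)
    (hm : 0 ≤ m) (hmK : 4 * K * m < κ) {p : ℝ × ℝ} (hp : p ∈ R) :
    m * lam * (|A p| + |B p| + |B p| + |D p|) < |A p * D p - B p ^ 2| := by
  calc m * lam * (|A p| + |B p| + |B p| + |D p|)
      ≤ m * lam * (K * lam + K * lam + K * lam + K * lam) := by
        gcongr
        exacts [hb.fst_le p hp, hb.mixed_le p hp, hb.mixed_le p hp, hb.snd_le p hp]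
    _ = 4 * K * m * lam ^ 2 := by ring
    _ < κ * lam ^ 2 := by gcongr
    _ ≤ _ := hb.le_det p hp

lemma HasHessianOn.diag_mul_det_pos_or_neg (h : HasHessianOn F u v A B D R)
    (hb : HessianBounds κ K lam A B D R) (hR : IsPreconnected R) (hκ : 0 < κ) (hlam : 0 < lam) :
    (∀ p ∈ R, 0 < A p * D p * (A p * D p - B p ^ 2)) ∨
      ∀ p ∈ R, A p * D p * (A p * D p - B p ^ 2) < 0 := by
  have hAD := h.continuousOn_fst_fst.mul h.continuousOn_snd_snd
  have hne : ∀ p ∈ R, A p * D p * (A p * D p - B p ^ 2) ≠ 0 := fun p hp =>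
    mul_ne_zero (mul_ne_zero (abs_pos.1 (lt_of_lt_of_le (by positivity) (hb.le_fst p hp)))
      (abs_pos.1 (lt_of_lt_of_le (by positivity) (hb.le_snd p hp))))
      (abs_pos.1 (lt_of_lt_of_le (by positivity) (hb.le_det p hp)))
  obtain ⟨τ, hτ, hsign⟩ :=
    exists_sign_forall_mul_eq_abs hR (hAD.mul (hAD.sub (h.continuousOn_fst_snd.pow 2))) hne
  have hpos : ∀ p ∈ R, 0 < τ * (A p * D p * (A p * D p - B p ^ 2)) := fun p hp =>
    (abs_pos.2 (hne p hp)).trans_eq (hsign p hp).symm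
  rcases mul_self_eq_one_iff.1 hτ with rfl | rfl
  · exact .inl fun p hp => by simpa only [one_mul] using hpos p hp
  · exact .inr fun p hp => by simpa only [neg_one_mul, neg_pos] using hpos p hp

lemma HasHessianOn.mul_dist_le_of_diag_mul_det_neg
    (h : HasHessianOn F u v A B D (Icc a b ×ˢ Icc c d))
    (hb : HessianBounds κ K lam A B D (Icc a b ×ˢ Icc c d)) (hlam : 0 < lam) (hm : 0 < m)
    (hmκ : m < κ) (hmK : 4 * K * m < κ)
    (hneg : ∀ p ∈ Icc a b ×ˢ Icc c d, A p * D p * (A p * D p - B p ^ 2) < 0)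
    {p q : ℝ × ℝ} (hp : p ∈ Icc a b ×ˢ Icc c d) (hq : q ∈ Icc a b ×ˢ Icc c d) :
    m * lam * (|q.1 - p.1| + |q.2 - p.2|) ≤ max |u q - u p| |v q - v p| := by
  have hdet_neg : ∀ z ∈ Icc a b ×ˢ Icc c d, A z * D z - B z ^ 2 < 0 := by
    intro z hz
    by_contra! hdet
    exact (hneg z hz).not_ge (mul_nonneg (by nlinarith [sq_nonneg (B z)]) hdet)
  have hB : ∀ z ∈ Icc a b ×ˢ Icc c d, m * lam < |B z| := by
    intro z hz
    have hAD : 0 < A z * D z := pos_of_mul_neg_left (hneg z hz) (hdet_neg z hz).le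
    have hmul := mul_lt_mul'' (hb.lt_abs_fst hlam hmκ hz) (hb.lt_abs_snd hlam hmκ hz)
      (by positivity) (by positivity)
    rw [← abs_mul, abs_of_pos hAD] at hmul
    refine lt_of_pow_lt_pow_left₀ 2 (abs_nonneg _) ?_
    rw [sq_abs]
    linarith [hdet_neg z hz]
  have hswap : HasJacobianOn v u B D A B (Icc a b ×ˢ Icc c d) := ⟨h.snd, h.fst⟩
  rw [max_comm]
  refine hswap.mul_dist_le_of_diag_mul_det_pos (by positivity) h.continuousOn_fst_snd
    h.continuousOn_fst_snd hB hB (fun z hz => ?_) (fun z hz => ?_) hp hq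
  · have hB₀ : 0 < |B z| := lt_trans (by positivity) (hB z hz)
    rw [← abs_mul_abs_self]
    exact mul_pos (mul_pos hB₀ hB₀) (by linarith [hdet_neg z hz, abs_mul_abs_self (B z)])
  · calc m * lam * (|B z| + |D z| + |A z| + |B z|)
        = m * lam * (|A z| + |B z| + |B z| + |D z|) := by ring
      _ < |A z * D z - B z ^ 2| := hb.mul_sum_abs_lt hlam hm.le hmK hz
      _ = |B z * B z - D z * A z| := by rw [abs_sub_comm]; ring_nf

-- When `(A, B; B, D)` does not become a `P`-matrix by changing signs of rows, `B ^ 2` dominates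
-- `A * D > 0`, and swapping the two rows makes it one.
lemma HasHessianOn.mul_dist_le (h : HasHessianOn F u v A B D (Icc a b ×ˢ Icc c d))
    (hb : HessianBounds κ K lam A B D (Icc a b ×ˢ Icc c d)) (hlam : 0 < lam) (hm : 0 < m)
    (hmκ : m < κ) (hmK : 4 * K * m < κ) {p q : ℝ × ℝ} (hp : p ∈ Icc a b ×ˢ Icc c d)
    (hq : q ∈ Icc a b ×ˢ Icc c d) :
    m * lam * (|q.1 - p.1| + |q.2 - p.2|) ≤ max |u q - u p| |v q - v p| := by
  rcases h.diag_mul_det_pos_or_neg hb (isPreconnected_Icc.prod isPreconnected_Icc)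
    (hm.trans hmκ) hlam with hpos | hneg
  · refine h.mul_dist_le_of_diag_mul_det_pos (by positivity) h.continuousOn_fst_fst
      h.continuousOn_snd_snd (fun z hz => hb.lt_abs_fst hlam hmκ hz)
      (fun z hz => hb.lt_abs_snd hlam hmκ hz) (fun z hz => ?_) (fun z hz => ?_) hp hq
    · simpa only [sq] using hpos z hz
    · simpa only [sq] using hb.mul_sum_abs_lt hlam hm.le hmK hz
  · exact h.mul_dist_le_of_diag_mul_det_neg hb hlam hm hmκ hmK hneg hp hq

end Expansion

lemma exists_forall_norm_sub_le_two_mul_norm {X E : Type*} [TopologicalSpace X]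
    [SeminormedAddCommGroup E] {s : Set X} {G : X → E} (hs : IsCompact s) (hne : s.Nonempty)
    (hG : ContinuousOn G s) : ∃ p ∈ s, ∀ z ∈ s, ‖G z - G p‖ ≤ 2 * ‖G z‖ := by
  obtain ⟨p, hp, hmin⟩ := hs.exists_isMinOn hne hG.norm
  refine ⟨p, hp, fun z hz => (norm_sub_le _ _).trans ?_⟩
  have hpz : ‖G p‖ ≤ ‖G z‖ := hmin hz
  linarith

lemma arsinh_le_log_one_add_two_mul {t : ℝ} (ht : 0 ≤ t) :
    Real.arsinh t ≤ Real.log (1 + 2 * t) := by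
  have hsqrt : √(1 + t ^ 2) ≤ 1 + t := Real.sqrt_le_iff.2 ⟨by positivity, by nlinarith⟩
  exact Real.log_le_log (by positivity) (by linarith)

lemma continuous_inv_sqrt_one_add_sq (μ x₀ : ℝ) :
    Continuous fun x : ℝ => (√(1 + (μ * (x - x₀)) ^ 2))⁻¹ :=
  Continuous.inv₀ (by fun_prop) fun _ => by positivity

lemma integral_inv_sqrt_one_add_sq_le {a b μ x₀ : ℝ} (hμ : 0 < μ) (hx₀ : x₀ ∈ Icc a b) :
    ∫ x in a..b, (√(1 + (μ * (x - x₀)) ^ 2))⁻¹ ≤ 2 / μ * Real.log (1 + 2 * μ * (b - a)) := by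
  have hderiv : ∀ x, HasDerivAt (fun x => Real.arsinh (μ * (x - x₀)) / μ)
      (√(1 + (μ * (x - x₀)) ^ 2))⁻¹ x := fun x =>
    ((((hasDerivAt_id x).sub_const x₀).const_mul μ).arsinh.div_const μ).congr_deriv
      (by simp [hμ.ne'])
  rw [intervalIntegral.integral_eq_sub_of_hasDerivAt (fun x _ => hderiv x)
    ((continuous_inv_sqrt_one_add_sq μ x₀).intervalIntegrable _ _)]
  have harsinh : ∀ t, 0 ≤ t → t ≤ b - a →
      Real.arsinh (μ * t) ≤ Real.log (1 + 2 * μ * (b - a)) := fun t ht htb =>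
    (arsinh_le_log_one_add_two_mul (by positivity)).trans
      (Real.log_le_log (by positivity) (by nlinarith))
  have hright := harsinh (b - x₀) (by linarith [hx₀.2]) (by linarith [hx₀.1])
  have hleft := harsinh (x₀ - a) (by linarith [hx₀.1]) (by linarith [hx₀.2])
  have hneg : Real.arsinh (μ * (a - x₀)) = -Real.arsinh (μ * (x₀ - a)) := by
    rw [← Real.arsinh_neg]
    ring_nf
  rw [hneg, ← sub_div, div_mul_eq_mul_div]
  gcongr
  linarith

lemma integral_inv_sq_add_sq_le {c d μ α y₀ : ℝ} (hμ : 0 < μ) (hα : 0 < α) :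
    ∫ y in c..d, (α ^ 2 + (μ * (y - y₀)) ^ 2)⁻¹ ≤ Real.pi / (μ * α) := by
  have hderiv : ∀ y, HasDerivAt (fun y => Real.arctan (μ / α * (y - y₀)) / (μ * α))
      (α ^ 2 + (μ * (y - y₀)) ^ 2)⁻¹ y := fun y =>
    ((((hasDerivAt_id y).sub_const y₀).const_mul (μ / α)).arctan.div_const (μ * α)).congr_deriv
      (by simp only [id]; field_simp)
  have hcont : Continuous fun y : ℝ => (α ^ 2 + (μ * (y - y₀)) ^ 2)⁻¹ :=
    Continuous.inv₀ (by fun_prop) fun y => by positivity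
  rw [intervalIntegral.integral_eq_sub_of_hasDerivAt (fun y _ => hderiv y)
    (hcont.intervalIntegrable _ _), ← sub_div]
  gcongr
  linarith [Real.arctan_lt_pi_div_two (μ / α * (d - y₀)),
    Real.neg_pi_div_two_lt_arctan (μ / α * (c - y₀))]

lemma setIntegral_Icc_prod_Icc_eq {E : Type*} [NormedAddCommGroup E] [NormedSpace ℝ E]
    {a b c d : ℝ} (hab : a ≤ b) (hcd : c ≤ d) {g : ℝ × ℝ → E}
    (hg : ContinuousOn g (Icc a b ×ˢ Icc c d)) :
    ∫ z in Icc a b ×ˢ Icc c d, g z = ∫ x in a..b, ∫ y in c..d, g (x, y) := by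
  simp only [intervalIntegral.integral_of_le hab, intervalIntegral.integral_of_le hcd,
    ← integral_Icc_eq_integral_Ioc]
  rw [Measure.volume_eq_prod]
  exact setIntegral_prod g (hg.integrableOn_compact (isCompact_Icc.prod isCompact_Icc))

lemma continuous_inv_one_add_sq_add_sq (μ x₀ y₀ : ℝ) :
    Continuous fun z : ℝ × ℝ => (1 + (μ * (z.1 - x₀)) ^ 2 + (μ * (z.2 - y₀)) ^ 2)⁻¹ :=
  Continuous.inv₀ (by fun_prop) fun _ => by positivity

lemma setIntegral_inv_one_add_sq_add_sq_le {a b c d μ x₀ y₀ : ℝ} (hcd : c ≤ d)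
    (hμ : 0 < μ) (hx₀ : x₀ ∈ Icc a b) :
    ∫ z in Icc a b ×ˢ Icc c d, (1 + (μ * (z.1 - x₀)) ^ 2 + (μ * (z.2 - y₀)) ^ 2)⁻¹ ≤
      2 * Real.pi / μ ^ 2 * Real.log (1 + 2 * μ * (b - a)) := by
  have hab : a ≤ b := hx₀.1.trans hx₀.2
  have hcont := continuous_inv_one_add_sq_add_sq μ x₀ y₀
  have hinner : ∀ x, ∫ y in c..d, (1 + (μ * (x - x₀)) ^ 2 + (μ * (y - y₀)) ^ 2)⁻¹ ≤
      Real.pi / μ * (√(1 + (μ * (x - x₀)) ^ 2))⁻¹ := fun x => by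
    have hpos : 0 < 1 + (μ * (x - x₀)) ^ 2 := by positivity
    convert integral_inv_sq_add_sq_le (c := c) (d := d) (y₀ := y₀) hμ (Real.sqrt_pos.2 hpos) using 1
    · rw [Real.sq_sqrt hpos.le]
    · field_simp
  rw [setIntegral_Icc_prod_Icc_eq hab hcd hcont.continuousOn]
  calc _ ≤ ∫ x in a..b, Real.pi / μ * (√(1 + (μ * (x - x₀)) ^ 2))⁻¹ :=
        intervalIntegral.integral_mono_on hab
          ((intervalIntegral.continuous_parametric_intervalIntegral_of_continuous'
            (by exact hcont) c d).intervalIntegrable a b)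
          (((continuous_inv_sqrt_one_add_sq μ x₀).const_mul _).intervalIntegrable a b)
          fun x _ => hinner x
    _ ≤ Real.pi / μ * (2 / μ * Real.log (1 + 2 * μ * (b - a))) := by
        rw [intervalIntegral.integral_const_mul]
        have := Real.pi_pos
        gcongr
        exact integral_inv_sqrt_one_add_sq_le hμ hx₀
    _ = _ := by field_simp

/-- The factor `1 / (lam + u² + v²)` by which a gradient `(u, v)` is multiplied in the integration
by parts; the term `lam` keeps it bounded near critical points. -/
noncomputable def gradWeight (lam u v : ℝ) : ℝ := (lam + u ^ 2 + v ^ 2)⁻¹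

lemma gradWeight_pos {lam : ℝ} (hlam : 0 < lam) (u v : ℝ) : 0 < gradWeight lam u v := by
  unfold gradWeight
  positivity

lemma gradWeight_comm (lam u v : ℝ) : gradWeight lam u v = gradWeight lam v u := by
  rw [gradWeight, gradWeight, add_right_comm]

lemma continuousOn_gradWeight {X : Type*} [TopologicalSpace X] {s : Set X} {u v : X → ℝ}
    {lam : ℝ} (hlam : 0 < lam) (hu : ContinuousOn u s) (hv : ContinuousOn v s) :
    ContinuousOn (fun z => gradWeight lam (u z) (v z)) s :=
  ((continuousOn_const.add (hu.pow 2)).add (hv.pow 2)).inv₀ fun z _ =>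
    (by positivity : 0 < lam + u z ^ 2 + v z ^ 2).ne'

lemma abs_mul_gradWeight_le {lam : ℝ} (hlam : 0 < lam) (u v : ℝ) :
    |u * gradWeight lam u v| ≤ (2 * √(lam + v ^ 2))⁻¹ := by
  have hN : 0 < lam + u ^ 2 + v ^ 2 := by positivity
  have hv : 0 < lam + v ^ 2 := by positivity
  rw [abs_mul, abs_of_pos (gradWeight_pos hlam u v), gradWeight, ← div_eq_mul_inv, ← one_div,
    div_le_div_iff₀ hN (by positivity)]
  nlinarith [sq_nonneg (|u| - √(lam + v ^ 2)), sq_abs u, Real.sq_sqrt hv.le]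

lemma integral_abs_mul_gradWeight_le {a b m lam : ℝ} {u v : ℝ → ℝ} (hab : a ≤ b)
    (hlam : 0 < lam) (hm : 0 < m) (hu : ContinuousOn u (Icc a b)) (hv : ContinuousOn v (Icc a b))
    (hexp : ∀ s ∈ Icc a b, ∀ t ∈ Icc a b, m * lam * |t - s| ≤ |v t - v s|) :
    ∫ t in a..b, |u t * gradWeight lam (u t) (v t)| ≤
      2 / (m * lam) * Real.log (1 + m * √lam * (b - a)) := by
  obtain ⟨t₀, ht₀, hmin⟩ :=
    exists_forall_norm_sub_le_two_mul_norm isCompact_Icc (nonempty_Icc.2 hab) hv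
  set μ := m * √lam / 2 with hμ
  have hpt : ∀ t ∈ Icc a b, |u t * gradWeight lam (u t) (v t)| ≤
      (2 * √lam)⁻¹ * (√(1 + (μ * (t - t₀)) ^ 2))⁻¹ := by
    intro t ht
    have hlow : m * lam / 2 * |t - t₀| ≤ |v t| := by
      linarith [hexp t₀ ht₀ t ht, hmin t ht, Real.norm_eq_abs (v t - v t₀), Real.norm_eq_abs (v t)]
    have hsq : lam * (1 + (μ * (t - t₀)) ^ 2) ≤ lam + v t ^ 2 := by
      calc lam * (1 + (μ * (t - t₀)) ^ 2) = lam + (m * lam / 2 * |t - t₀|) ^ 2 := by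
            rw [hμ, mul_pow _ |t - t₀|, sq_abs]
            linear_combination (lam * m ^ 2 * (t - t₀) ^ 2 / 4) * Real.sq_sqrt hlam.le
        _ ≤ lam + |v t| ^ 2 := by gcongr
        _ = lam + v t ^ 2 := by rw [sq_abs]
    refine (abs_mul_gradWeight_le hlam _ _).trans ?_
    rw [← mul_inv, mul_assoc, ← Real.sqrt_mul hlam.le]
    gcongr
  calc _ ≤ ∫ t in a..b, (2 * √lam)⁻¹ * (√(1 + (μ * (t - t₀)) ^ 2))⁻¹ :=
        intervalIntegral.integral_mono_on hab
          ((hu.mul (continuousOn_gradWeight hlam hu hv)).abs.intervalIntegrable_of_Icc hab)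
          (((continuous_inv_sqrt_one_add_sq μ t₀).const_mul _).intervalIntegrable a b) hpt
    _ ≤ (2 * √lam)⁻¹ * (2 / μ * Real.log (1 + 2 * μ * (b - a))) := by
        rw [intervalIntegral.integral_const_mul]
        gcongr
        exact integral_inv_sqrt_one_add_sq_le (by positivity) ht₀
    _ = _ := by
        rw [← mul_assoc, show (2 * √lam)⁻¹ * (2 / μ) = 2 / (m * √lam ^ 2) by rw [hμ]; field_simp,
          Real.sq_sqrt hlam.le, hμ, mul_div_cancel₀ _ two_ne_zero]

lemma mul_gradWeight_le_inv_one_add {lam m x y u v : ℝ} (hlam : 0 < lam) (hm : 0 < m)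
    (hexp : m * lam * (|x| + |y|) ≤ 2 * max |u| |v|) :
    lam * gradWeight lam u v ≤ (1 + (m * √lam / 2 * x) ^ 2 + (m * √lam / 2 * y) ^ 2)⁻¹ := by
  have hmax : max |u| |v| ^ 2 ≤ u ^ 2 + v ^ 2 := by
    rcases max_cases |u| |v| with ⟨h, _⟩ | ⟨h, _⟩ <;> rw [h, sq_abs] <;>
      nlinarith [sq_nonneg u, sq_nonneg v]
  have hlow : lam * (1 + (m * √lam / 2 * x) ^ 2 + (m * √lam / 2 * y) ^ 2) ≤
      lam + u ^ 2 + v ^ 2 := by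
    calc lam * (1 + (m * √lam / 2 * x) ^ 2 + (m * √lam / 2 * y) ^ 2)
        = lam + (m * lam / 2) ^ 2 * (|x| ^ 2 + |y| ^ 2) := by
          rw [sq_abs, sq_abs]
          linear_combination (lam * m ^ 2 * (x ^ 2 + y ^ 2) / 4) * Real.sq_sqrt hlam.le
      _ ≤ lam + (m * lam / 2) ^ 2 * (|x| + |y|) ^ 2 := by
          gcongr
          nlinarith [mul_nonneg (abs_nonneg x) (abs_nonneg y)]
      _ = lam + (m * lam * (|x| + |y|) / 2) ^ 2 := by ring
      _ ≤ lam + max |u| |v| ^ 2 := by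
          gcongr
          linarith
      _ ≤ lam + u ^ 2 + v ^ 2 := by linarith
  rw [gradWeight, ← div_eq_mul_inv, ← one_div, div_le_div_iff₀ (by positivity) (by positivity)]
  linarith

lemma setIntegral_mul_gradWeight_le {a b c d lam m : ℝ} {u v : ℝ × ℝ → ℝ}
    (hab : a ≤ b) (hcd : c ≤ d)
    (hlam : 0 < lam) (hm : 0 < m) (hu : ContinuousOn u (Icc a b ×ˢ Icc c d))
    (hv : ContinuousOn v (Icc a b ×ˢ Icc c d))
    (hexp : ∀ p ∈ Icc a b ×ˢ Icc c d, ∀ q ∈ Icc a b ×ˢ Icc c d,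
      m * lam * (|q.1 - p.1| + |q.2 - p.2|) ≤ max |u q - u p| |v q - v p|) :
    ∫ z in Icc a b ×ˢ Icc c d, lam * gradWeight lam (u z) (v z) ≤
      8 * Real.pi / (m ^ 2 * lam) * Real.log (1 + m * √lam * (b - a)) := by
  have hcompact : IsCompact (Icc a b ×ˢ Icc c d) := isCompact_Icc.prod isCompact_Icc
  obtain ⟨p, hp, hmin⟩ := exists_forall_norm_sub_le_two_mul_norm hcompact
    ((nonempty_Icc.2 hab).prod (nonempty_Icc.2 hcd)) (hu.prodMk hv)
  calc _ ≤ ∫ z in Icc a b ×ˢ Icc c d, (1 + (m * √lam / 2 * (z.1 - p.1)) ^ 2 +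
          (m * √lam / 2 * (z.2 - p.2)) ^ 2)⁻¹ := by
        refine setIntegral_mono_on
          ((continuousOn_gradWeight hlam hu hv).const_mul lam |>.integrableOn_compact hcompact)
          ((continuous_inv_one_add_sq_add_sq _ _ _).continuousOn.integrableOn_compact hcompact)
          hcompact.measurableSet fun z hz => ?_
        exact mul_gradWeight_le_inv_one_add hlam hm ((hexp p hp z hz).trans (hmin z hz))
    _ ≤ 2 * Real.pi / (m * √lam / 2) ^ 2 *
          Real.log (1 + 2 * (m * √lam / 2) * (b - a)) :=
        setIntegral_inv_one_add_sq_add_sq_le hcd (by positivity) hp.1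
    _ = _ := by
        rw [div_pow, mul_pow, Real.sq_sqrt hlam.le, mul_div_cancel₀ _ two_ne_zero]
        field_simp
        ring

section IntegrationByParts

variable {F u v W₁ W₂ α β γ δ : ℝ × ℝ → ℝ} {a b c d : ℝ}

lemma hasFDerivAt_cexp_mul {F w : ℝ × ℝ → ℝ} {u v w₁ w₂ : ℝ} {z : ℝ × ℝ}
    (hF : HasFDerivAt F (planeForm u v) z) (hw : HasFDerivAt w (planeForm w₁ w₂) z) :
    HasFDerivAt (fun z => Complex.exp (Complex.I * F z) * w z)
      (Complex.exp (Complex.I * F z) •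
        ((Complex.I * w z) • (Complex.ofRealCLM ∘L planeForm u v) +
          Complex.ofRealCLM ∘L planeForm w₁ w₂)) z := by
  have hF' : HasFDerivAt (fun z => (F z : ℂ)) (Complex.ofRealCLM ∘L planeForm u v) z :=
    Complex.ofRealCLM.hasFDerivAt.comp z hF
  have hw' : HasFDerivAt (fun z => (w z : ℂ)) (Complex.ofRealCLM ∘L planeForm w₁ w₂) z :=
    Complex.ofRealCLM.hasFDerivAt.comp z hw
  refine ((hF'.const_mul Complex.I).cexp.mul hw').congr_fderiv ?_
  ext <;> simp <;> ring

lemma setIntegral_cexp_mul_divergence_eq (hab : a ≤ b) (hcd : c ≤ d)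
    (hF : ∀ z ∈ Icc a b ×ˢ Icc c d, HasFDerivAt F (planeForm (u z) (v z)) z)
    (hW : HasJacobianOn W₁ W₂ α β γ δ (Icc a b ×ˢ Icc c d))
    (hint : IntegrableOn (fun z => Complex.exp (Complex.I * F z) *
      (Complex.I * (u z * W₁ z + v z * W₂ z : ℝ) + (α z + δ z : ℝ))) (Icc a b ×ˢ Icc c d)) :
    ∫ z in Icc a b ×ˢ Icc c d, Complex.exp (Complex.I * F z) *
      (Complex.I * (u z * W₁ z + v z * W₂ z : ℝ) + (α z + δ z : ℝ)) =
      (((∫ x in a..b, Complex.exp (Complex.I * F (x, d)) * W₂ (x, d)) -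
        ∫ x in a..b, Complex.exp (Complex.I * F (x, c)) * W₂ (x, c)) +
        ∫ y in c..d, Complex.exp (Complex.I * F (b, y)) * W₁ (b, y)) -
        ∫ y in c..d, Complex.exp (Complex.I * F (a, y)) * W₁ (a, y) := by
  have hR : Icc (a, c) (b, d) = Icc a b ×ˢ Icc c d := (Icc_prod_Icc a b c d).symm
  have hsub : Ioo a b ×ˢ Ioo c d ⊆ Icc a b ×ˢ Icc c d :=
    prod_mono Ioo_subset_Icc_self Ioo_subset_Icc_self
  have hd₁ := fun z hz => hasFDerivAt_cexp_mul (hF z hz) (hW.fst z hz)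
  have hd₂ := fun z hz => hasFDerivAt_cexp_mul (hF z hz) (hW.snd z hz)
  rw [← hR]
  rw [← hR] at hint
  convert integral_divergence_prod_Icc_of_hasFDerivAt_of_le
    (fun z => Complex.exp (Complex.I * F z) * W₁ z)
    (fun z => Complex.exp (Complex.I * F z) * W₂ z) _ _ (a, c) (b, d) ⟨hab, hcd⟩
    (by rw [hR]; exact fun z hz => (hd₁ z hz).continuousAt.continuousWithinAt)
    (by rw [hR]; exact fun z hz => (hd₂ z hz).continuousAt.continuousWithinAt)
    (fun z hz => hd₁ z (hsub hz)) (fun z hz => hd₂ z (hsub hz)) ?_ using 3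
  · simp
    ring
  · convert hint using 2
    simp
    ring

lemma norm_cexp_I_mul_ofReal (x : ℝ) : ‖Complex.exp (Complex.I * x)‖ = 1 := by
  rw [mul_comm, Complex.norm_exp_ofReal_mul_I]

lemma norm_integral_cexp_mul_le {a b : ℝ} (hab : a ≤ b) (f w : ℝ → ℝ) :
    ‖∫ t in a..b, Complex.exp (Complex.I * f t) * w t‖ ≤ ∫ t in a..b, |w t| :=
  (intervalIntegral.norm_integral_le_integral_norm hab).trans_eq (by
    simp only [norm_mul, norm_cexp_I_mul_ofReal, one_mul, Complex.norm_real, Real.norm_eq_abs])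

lemma norm_setIntegral_cexp_mul_divergence_le (hab : a ≤ b) (hcd : c ≤ d)
    (hF : ∀ z ∈ Icc a b ×ˢ Icc c d, HasFDerivAt F (planeForm (u z) (v z)) z)
    (hW : HasJacobianOn W₁ W₂ α β γ δ (Icc a b ×ˢ Icc c d))
    (hint : IntegrableOn (fun z => Complex.exp (Complex.I * F z) *
      (Complex.I * (u z * W₁ z + v z * W₂ z : ℝ) + (α z + δ z : ℝ))) (Icc a b ×ˢ Icc c d)) :
    ‖∫ z in Icc a b ×ˢ Icc c d, Complex.exp (Complex.I * F z) *
      (Complex.I * (u z * W₁ z + v z * W₂ z : ℝ) + (α z + δ z : ℝ))‖ ≤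
      (((∫ x in a..b, |W₂ (x, d)|) + ∫ x in a..b, |W₂ (x, c)|) + ∫ y in c..d, |W₁ (b, y)|) +
        ∫ y in c..d, |W₁ (a, y)| := by
  rw [setIntegral_cexp_mul_divergence_eq hab hcd hF hW hint]
  refine norm_sub_le_of_le (norm_add_le_of_le (norm_sub_le_of_le ?_ ?_) ?_) ?_
  exacts [norm_integral_cexp_mul_le hab (fun x => F (x, d)) fun x => W₂ (x, d),
    norm_integral_cexp_mul_le hab (fun x => F (x, c)) fun x => W₂ (x, c),
    norm_integral_cexp_mul_le hcd (fun y => F (b, y)) fun y => W₁ (b, y),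
    norm_integral_cexp_mul_le hcd (fun y => F (a, y)) fun y => W₁ (a, y)]

lemma norm_setIntegral_cexp_le (hab : a ≤ b) (hcd : c ≤ d)
    (hF : ∀ z ∈ Icc a b ×ˢ Icc c d, HasFDerivAt F (planeForm (u z) (v z)) z)
    (hW : HasJacobianOn W₁ W₂ α β γ δ (Icc a b ×ˢ Icc c d))
    (hu : ContinuousOn u (Icc a b ×ˢ Icc c d)) (hv : ContinuousOn v (Icc a b ×ˢ Icc c d))
    (hα : ContinuousOn α (Icc a b ×ˢ Icc c d)) (hδ : ContinuousOn δ (Icc a b ×ˢ Icc c d)) :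
    ‖∫ z in Icc a b ×ˢ Icc c d, Complex.exp (Complex.I * F z)‖ ≤
      ((((∫ x in a..b, |W₂ (x, d)|) + ∫ x in a..b, |W₂ (x, c)|) + ∫ y in c..d, |W₁ (b, y)|) +
        ∫ y in c..d, |W₁ (a, y)|) +
      ∫ z in Icc a b ×ˢ Icc c d, (|1 - (u z * W₁ z + v z * W₂ z)| + |α z + δ z|) := by
  have hcompact : IsCompact (Icc a b ×ˢ Icc c d) := isCompact_Icc.prod isCompact_Icc
  have hE : ContinuousOn (fun z => Complex.exp (Complex.I * F z)) (Icc a b ×ˢ Icc c d) := by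
    have : ContinuousOn F (Icc a b ×ˢ Icc c d) :=
      fun z hz => (hF z hz).continuousAt.continuousWithinAt
    fun_prop
  have hg : ContinuousOn (fun z => u z * W₁ z + v z * W₂ z) (Icc a b ×ˢ Icc c d) :=
    (hu.mul hW.continuousOn_fst).add (hv.mul hW.continuousOn_snd)
  have hdiv : ContinuousOn (fun z => α z + δ z) (Icc a b ×ˢ Icc c d) := hα.add hδ
  set E := fun z => Complex.exp (Complex.I * F z)
  set Q := fun z => E z * (Complex.I * (u z * W₁ z + v z * W₂ z : ℝ) + (α z + δ z : ℝ)) with hQ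
  set G := fun z => E z *
    ((1 - (u z * W₁ z + v z * W₂ z) : ℝ) + Complex.I * (α z + δ z : ℝ)) with hG
  have hQi : IntegrableOn Q (Icc a b ×ˢ Icc c d) :=
    ContinuousOn.integrableOn_compact hcompact (by fun_prop)
  have hGi : IntegrableOn G (Icc a b ×ˢ Icc c d) :=
    ContinuousOn.integrableOn_compact hcompact (by fun_prop)
  have hGle : ∀ z, ‖G z‖ ≤ |1 - (u z * W₁ z + v z * W₂ z)| + |α z + δ z| := fun z => by
    rw [hG, norm_mul, norm_cexp_I_mul_ofReal, one_mul]
    refine (norm_add_le _ _).trans_eq ?_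
    rw [norm_mul, Complex.norm_I, one_mul, Complex.norm_real, Complex.norm_real,
      Real.norm_eq_abs, Real.norm_eq_abs]
  have hsplit : ∫ z in Icc a b ×ˢ Icc c d, E z =
      -Complex.I * (∫ z in Icc a b ×ˢ Icc c d, Q z) + ∫ z in Icc a b ×ˢ Icc c d, G z := by
    rw [← integral_const_mul, ← integral_add (hQi.const_mul _) hGi]
    congr with z
    simp only [hQ, hG]
    push_cast
    linear_combination (E z * (u z * W₁ z + v z * W₂ z)) * Complex.I_sq
  rw [hsplit]
  refine norm_add_le_of_le ?_ (norm_integral_le_of_norm_le ?_ (.of_forall hGle))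
  · rw [norm_mul, norm_neg, Complex.norm_I, one_mul]
    exact norm_setIntegral_cexp_mul_divergence_le hab hcd hF hW hQi
  · exact ((continuousOn_const.sub hg).abs.add hdiv.abs).integrableOn_compact hcompact

end IntegrationByParts

section GradWeight

variable {u v α β γ δ : ℝ × ℝ → ℝ} {R : Set (ℝ × ℝ)} {lam : ℝ}

lemma hasFDerivAt_gradWeight {u₁ u₂ v₁ v₂ : ℝ} {z : ℝ × ℝ} (hlam : 0 < lam)
    (hu : HasFDerivAt u (planeForm u₁ u₂) z) (hv : HasFDerivAt v (planeForm v₁ v₂) z) :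
    HasFDerivAt (fun z => gradWeight lam (u z) (v z))
      (planeForm (-(2 * (u z * u₁ + v z * v₁) * gradWeight lam (u z) (v z) ^ 2))
        (-(2 * (u z * u₂ + v z * v₂) * gradWeight lam (u z) (v z) ^ 2))) z := by
  have hN : lam + u z ^ 2 + v z ^ 2 ≠ 0 := by positivity
  refine ((hasDerivAt_inv hN).comp_hasFDerivAt z
    (((hu.pow 2).const_add lam).add (hv.pow 2))).congr_fderiv ?_
  ext <;> simp [gradWeight] <;> ring

lemma HasJacobianOn.mul_gradWeight (h : HasJacobianOn u v α β γ δ R) (hlam : 0 < lam) :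
    HasJacobianOn (fun z => u z * gradWeight lam (u z) (v z))
      (fun z => v z * gradWeight lam (u z) (v z))
      (fun z => α z * gradWeight lam (u z) (v z) -
        u z * (2 * (u z * α z + v z * γ z) * gradWeight lam (u z) (v z) ^ 2))
      (fun z => β z * gradWeight lam (u z) (v z) -
        u z * (2 * (u z * β z + v z * δ z) * gradWeight lam (u z) (v z) ^ 2))
      (fun z => γ z * gradWeight lam (u z) (v z) -
        v z * (2 * (u z * α z + v z * γ z) * gradWeight lam (u z) (v z) ^ 2))
      (fun z => δ z * gradWeight lam (u z) (v z) -
        v z * (2 * (u z * β z + v z * δ z) * gradWeight lam (u z) (v z) ^ 2)) R := by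
  constructor <;> intro z hz
  · refine ((h.fst z hz).mul
      (hasFDerivAt_gradWeight hlam (h.fst z hz) (h.snd z hz))).congr_fderiv ?_
    ext <;> simp <;> ring
  · refine ((h.snd z hz).mul
      (hasFDerivAt_gradWeight hlam (h.fst z hz) (h.snd z hz))).congr_fderiv ?_
    ext <;> simp <;> ring

lemma one_sub_gradWeight {u v : ℝ} (hlam : 0 < lam) :
    1 - (u * (u * gradWeight lam u v) + v * (v * gradWeight lam u v)) =
      lam * gradWeight lam u v := by
  have hN : lam + u ^ 2 + v ^ 2 ≠ 0 := by positivity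
  rw [gradWeight]
  field_simp
  ring

lemma abs_divergence_mul_gradWeight_le {u v α β γ δ M : ℝ} (hlam : 0 < lam)
    (hα : |α| ≤ M) (hβ : |β| ≤ M) (hγ : |γ| ≤ M) (hδ : |δ| ≤ M) :
    |α * gradWeight lam u v - u * (2 * (u * α + v * γ) * gradWeight lam u v ^ 2) +
      (δ * gradWeight lam u v - v * (2 * (u * β + v * δ) * gradWeight lam u v ^ 2))| ≤
      4 * M * gradWeight lam u v := by
  have hw : 0 < gradWeight lam u v := gradWeight_pos hlam u v
  set N := lam + u ^ 2 + v ^ 2 with hN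
  have hN₀ : 0 < N := by positivity
  have hwN : N * gradWeight lam u v = 1 := mul_inv_cancel₀ hN₀.ne'
  have hM : 0 ≤ M := (abs_nonneg α).trans hα
  have hu : |N - 2 * u ^ 2| ≤ N := abs_le.2 ⟨by nlinarith [hN], by nlinarith⟩
  have hv : |N - 2 * v ^ 2| ≤ N := abs_le.2 ⟨by nlinarith [hN], by nlinarith⟩
  have huv : |2 * (u * v)| ≤ N :=
    abs_le.2 ⟨by nlinarith [sq_nonneg (u + v)], by nlinarith [sq_nonneg (u - v)]⟩
  have hnum : |α * (N - 2 * u ^ 2) + δ * (N - 2 * v ^ 2) - β * (2 * (u * v)) -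
      γ * (2 * (u * v))| ≤ 4 * M * N := by
    calc _ ≤ |α| * |N - 2 * u ^ 2| + |δ| * |N - 2 * v ^ 2| + |β| * |2 * (u * v)| +
          |γ| * |2 * (u * v)| := by
          simp only [← abs_mul]
          exact norm_sub_le_of_le (norm_sub_le_of_le (norm_add_le (E := ℝ) _ _) le_rfl) le_rfl
      _ ≤ M * N + M * N + M * N + M * N := by gcongr
      _ = 4 * M * N := by ring
  calc _ = |(α * (N - 2 * u ^ 2) + δ * (N - 2 * v ^ 2) - β * (2 * (u * v)) -
          γ * (2 * (u * v))) * gradWeight lam u v ^ 2| := by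
        congr 1
        linear_combination (-(α + δ) * gradWeight lam u v) * hwN
    _ ≤ 4 * M * N * gradWeight lam u v ^ 2 := by
        rw [abs_mul, abs_of_pos (pow_pos hw 2)]
        gcongr
    _ = 4 * M * gradWeight lam u v := by
        linear_combination (4 * M * gradWeight lam u v) * hwN

end GradWeight

section SecondDerivativeTest

variable {F u v A B D : ℝ × ℝ → ℝ} {a b c d κ K lam m : ℝ}

lemma HasHessianOn.integral_abs_fst_mul_gradWeight_le
    (h : HasHessianOn F u v A B D (Icc a b ×ˢ Icc c d))
    (hb : HessianBounds κ K lam A B D (Icc a b ×ˢ Icc c d)) (hcd : c ≤ d) (hlam : 0 < lam)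
    (hm : 0 < m) (hmκ : m < κ) {x : ℝ} (hx : x ∈ Icc a b) :
    ∫ y in c..d, |u (x, y) * gradWeight lam (u (x, y)) (v (x, y))| ≤
      2 / (m * lam) * Real.log (1 + m * √lam * (d - c)) := by
  have hmaps : MapsTo (fun y => (x, y)) (Icc c d) (Icc a b ×ˢ Icc c d) := fun y hy => ⟨hx, hy⟩
  refine integral_abs_mul_gradWeight_le hcd hlam hm
    (h.continuousOn_fst.comp (by fun_prop) hmaps) (h.continuousOn_snd.comp (by fun_prop) hmaps)
    fun s hs t ht => ?_
  obtain ⟨z, hz, hvz⟩ := exists_sub_eq_of_hasFDerivAt_planeForm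
    ((convex_Icc a b).prod (convex_Icc c d)) h.snd (hmaps hs) (hmaps ht)
  rw [hvz, sub_self, mul_zero, zero_add, abs_mul]
  gcongr
  exact (hb.lt_abs_snd hlam hmκ hz).le

lemma HasHessianOn.integral_abs_snd_mul_gradWeight_le
    (h : HasHessianOn F u v A B D (Icc a b ×ˢ Icc c d))
    (hb : HessianBounds κ K lam A B D (Icc a b ×ˢ Icc c d)) (hab : a ≤ b) (hlam : 0 < lam)
    (hm : 0 < m) (hmκ : m < κ) {y : ℝ} (hy : y ∈ Icc c d) :
    ∫ x in a..b, |v (x, y) * gradWeight lam (u (x, y)) (v (x, y))| ≤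
      2 / (m * lam) * Real.log (1 + m * √lam * (b - a)) := by
  have hmaps : MapsTo (fun x => (x, y)) (Icc a b) (Icc a b ×ˢ Icc c d) := fun x hx => ⟨hx, hy⟩
  simp only [gradWeight_comm lam (u _)]
  refine integral_abs_mul_gradWeight_le hab hlam hm
    (h.continuousOn_snd.comp (by fun_prop) hmaps) (h.continuousOn_fst.comp (by fun_prop) hmaps)
    fun s hs t ht => ?_
  obtain ⟨z, hz, huz⟩ := exists_sub_eq_of_hasFDerivAt_planeForm
    ((convex_Icc a b).prod (convex_Icc c d)) h.fst (hmaps hs) (hmaps ht)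
  rw [huz, sub_self, mul_zero, add_zero, abs_mul]
  gcongr
  exact (hb.lt_abs_fst hlam hmκ hz).le

lemma HasHessianOn.norm_setIntegral_cexp_le_edges_add
    (h : HasHessianOn F u v A B D (Icc a b ×ˢ Icc c d))
    (hb : HessianBounds κ K lam A B D (Icc a b ×ˢ Icc c d)) (hab : a ≤ b) (hcd : c ≤ d)
    (hlam : 0 < lam) :
    ‖∫ z in Icc a b ×ˢ Icc c d, Complex.exp (Complex.I * F z)‖ ≤
      ((((∫ x in a..b, |v (x, d) * gradWeight lam (u (x, d)) (v (x, d))|) +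
        ∫ x in a..b, |v (x, c) * gradWeight lam (u (x, c)) (v (x, c))|) +
        ∫ y in c..d, |u (b, y) * gradWeight lam (u (b, y)) (v (b, y))|) +
        ∫ y in c..d, |u (a, y) * gradWeight lam (u (a, y)) (v (a, y))|) +
      (1 + 4 * K) * ∫ z in Icc a b ×ˢ Icc c d, lam * gradWeight lam (u z) (v z) := by
  have hcompact : IsCompact (Icc a b ×ˢ Icc c d) := isCompact_Icc.prod isCompact_Icc
  have hu := h.continuousOn_fst
  have hv := h.continuousOn_snd
  have hw := continuousOn_gradWeight hlam hu hv
  have hA := h.continuousOn_fst_fst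
  have hB := h.continuousOn_fst_snd
  have hD := h.continuousOn_snd_snd
  refine (norm_setIntegral_cexp_le hab hcd h.grad (h.mul_gradWeight hlam) hu hv (by fun_prop)
    (by fun_prop)).trans (add_le_add_right ?_ _)
  rw [← integral_const_mul]
  refine setIntegral_mono_on (ContinuousOn.integrableOn_compact hcompact (by fun_prop))
    (ContinuousOn.integrableOn_compact hcompact (by fun_prop)) hcompact.measurableSet
    fun z hz => ?_
  have hdiv := abs_divergence_mul_gradWeight_le (u := u z) (v := v z) hlam (hb.fst_le z hz)
    (hb.mixed_le z hz) (hb.mixed_le z hz) (hb.snd_le z hz)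
  rw [one_sub_gradWeight hlam, abs_of_pos (mul_pos hlam (gradWeight_pos hlam _ _))]
  linarith

lemma HasHessianOn.norm_setIntegral_cexp_le
    (h : HasHessianOn F u v A B D (Icc a b ×ˢ Icc c d))
    (hb : HessianBounds κ K lam A B D (Icc a b ×ˢ Icc c d)) (hab : a ≤ b) (hcd : c ≤ d)
    (hlam : 0 < lam) (hK : 0 ≤ K) (hm : 0 < m) (hmκ : m < κ) (hmK : 4 * K * m < κ) :
    ‖∫ z in Icc a b ×ˢ Icc c d, Complex.exp (Complex.I * F z)‖ ≤
      4 / (m * lam) * Real.log (1 + m * √lam * (b - a)) +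
      4 / (m * lam) * Real.log (1 + m * √lam * (d - c)) +
      (1 + 4 * K) * (8 * Real.pi / (m ^ 2 * lam) * Real.log (1 + m * √lam * (b - a))) := by
  calc _ ≤ _ := h.norm_setIntegral_cexp_le_edges_add hb hab hcd hlam
    _ ≤ (((2 / (m * lam) * Real.log (1 + m * √lam * (b - a)) +
          2 / (m * lam) * Real.log (1 + m * √lam * (b - a))) +
          2 / (m * lam) * Real.log (1 + m * √lam * (d - c))) +
          2 / (m * lam) * Real.log (1 + m * √lam * (d - c))) +
        (1 + 4 * K) * (8 * Real.pi / (m ^ 2 * lam) * Real.log (1 + m * √lam * (b - a))) := by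
        gcongr
        · exact h.integral_abs_snd_mul_gradWeight_le hb hab hlam hm hmκ (right_mem_Icc.2 hcd)
        · exact h.integral_abs_snd_mul_gradWeight_le hb hab hlam hm hmκ (left_mem_Icc.2 hcd)
        · exact h.integral_abs_fst_mul_gradWeight_le hb hcd hlam hm hmκ (right_mem_Icc.2 hab)
        · exact h.integral_abs_fst_mul_gradWeight_le hb hcd hlam hm hmκ (left_mem_Icc.2 hab)
        · exact setIntegral_mul_gradWeight_le hab hcd hlam hm h.continuousOn_fst
            h.continuousOn_snd fun p hp q hq => h.mul_dist_le hb hlam hm hmκ hmK hp hq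
    _ = _ := by ring

end SecondDerivativeTest

section PartialDerivatives

/-- The partial derivative of `F` in the first coordinate, as the `deriv` of a slice (hence `0`
where the slice is not differentiable). -/
noncomputable def partialFst (F : ℝ × ℝ → ℝ) (p : ℝ × ℝ) : ℝ :=
  deriv (fun t => F (t, p.2)) p.1

/-- The partial derivative of `F` in the second coordinate, as the `deriv` of a slice (hence `0`
where the slice is not differentiable). -/
noncomputable def partialSnd (F : ℝ × ℝ → ℝ) (p : ℝ × ℝ) : ℝ :=
  deriv (fun t => F (p.1, t)) p.2

variable {F : ℝ × ℝ → ℝ} {U : Set (ℝ × ℝ)} {p : ℝ × ℝ} {n m : WithTop ℕ∞}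

lemma partialFst_eq_fderiv (hF : DifferentiableAt ℝ F p) :
    partialFst F p = fderiv ℝ F p (1, 0) :=
  (hF.hasFDerivAt.comp_hasDerivAt p.1
    ((hasDerivAt_id p.1).prodMk (hasDerivAt_const p.1 p.2))).deriv

lemma partialSnd_eq_fderiv (hF : DifferentiableAt ℝ F p) :
    partialSnd F p = fderiv ℝ F p (0, 1) :=
  (hF.hasFDerivAt.comp_hasDerivAt p.2
    ((hasDerivAt_const p.2 p.1).prodMk (hasDerivAt_id p.2))).deriv

lemma hasFDerivAt_planeForm_partial (hF : DifferentiableAt ℝ F p) :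
    HasFDerivAt F (planeForm (partialFst F p) (partialSnd F p)) p := by
  refine hF.hasFDerivAt.congr_fderiv ?_
  ext <;> simp [partialFst_eq_fderiv hF, partialSnd_eq_fderiv hF]

lemma differentiableAt_of_contDiffOn_isOpen (hF : ContDiffOn ℝ n F U) (hU : IsOpen U)
    (hn : n ≠ 0) (hp : p ∈ U) : DifferentiableAt ℝ F p :=
  (hF.differentiableOn hn).differentiableAt (hU.mem_nhds hp)

lemma contDiffOn_partialFst (hF : ContDiffOn ℝ n F U) (hU : IsOpen U) (hmn : m + 1 ≤ n) :
    ContDiffOn ℝ m (partialFst F) U :=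
  ((hF.fderiv_of_isOpen hU hmn).clm_apply contDiffOn_const).congr fun _ hp =>
    partialFst_eq_fderiv (differentiableAt_of_contDiffOn_isOpen hF hU
      (one_ne_zero.bot_lt.trans_le (le_add_self.trans hmn)).ne' hp)

lemma contDiffOn_partialSnd (hF : ContDiffOn ℝ n F U) (hU : IsOpen U) (hmn : m + 1 ≤ n) :
    ContDiffOn ℝ m (partialSnd F) U :=
  ((hF.fderiv_of_isOpen hU hmn).clm_apply contDiffOn_const).congr fun _ hp =>
    partialSnd_eq_fderiv (differentiableAt_of_contDiffOn_isOpen hF hU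
      (one_ne_zero.bot_lt.trans_le (le_add_self.trans hmn)).ne' hp)

lemma partialSnd_partialFst_eq (hF : ContDiffOn ℝ 2 F U) (hU : IsOpen U) (hp : p ∈ U) :
    partialSnd (partialFst F) p = partialFst (partialSnd F) p := by
  have hsymm := (hF.contDiffAt (hU.mem_nhds hp)).isSymmSndFDerivAt
    minSmoothness_of_isRCLikeNormedField.le
  have hd : DifferentiableAt ℝ (fderiv ℝ F) p := ((hF.fderiv_of_isOpen hU
    one_add_one_eq_two.le).differentiableOn one_ne_zero).differentiableAt (hU.mem_nhds hp)
  have happly (e : ℝ × ℝ) :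
      HasFDerivAt (fun z => fderiv ℝ F z e) ((fderiv ℝ (fderiv ℝ F) p).flip e) p :=
    (hd.hasFDerivAt.clm_apply (hasFDerivAt_const e p)).congr_fderiv (by ext <;> simp)
  have hdiff : ∀ᶠ z in 𝓝 p, DifferentiableAt ℝ F z := by
    filter_upwards [hU.mem_nhds hp] with z hz
    exact differentiableAt_of_contDiffOn_isOpen hF hU two_ne_zero hz
  have hfst := (happly (1, 0)).congr_of_eventuallyEq
    (hdiff.mono fun _ hz => partialFst_eq_fderiv hz)
  have hsnd := (happly (0, 1)).congr_of_eventuallyEq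
    (hdiff.mono fun _ hz => partialSnd_eq_fderiv hz)
  rw [partialSnd_eq_fderiv hfst.differentiableAt, partialFst_eq_fderiv hsnd.differentiableAt,
    hfst.fderiv, hsnd.fderiv]
  exact hsymm (0, 1) (1, 0)

lemma hasHessianOn_of_contDiffOn (hF : ContDiffOn ℝ 2 F U) (hU : IsOpen U) :
    HasHessianOn F (partialFst F) (partialSnd F) (partialFst (partialFst F))
      (partialFst (partialSnd F)) (partialSnd (partialSnd F)) U := by
  have hfst := contDiffOn_partialFst hF hU one_add_one_eq_two.le
  have hsnd := contDiffOn_partialSnd hF hU one_add_one_eq_two.le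
  refine ⟨⟨fun p hp => ?_, fun p hp => ?_⟩, fun p hp => ?_, ?_, ?_, ?_⟩
  · rw [← partialSnd_partialFst_eq hF hU hp]
    exact hasFDerivAt_planeForm_partial
      (differentiableAt_of_contDiffOn_isOpen hfst hU one_ne_zero hp)
  · exact hasFDerivAt_planeForm_partial
      (differentiableAt_of_contDiffOn_isOpen hsnd hU one_ne_zero hp)
  · exact hasFDerivAt_planeForm_partial
      (differentiableAt_of_contDiffOn_isOpen hF hU two_ne_zero hp)
  · exact (contDiffOn_partialFst hfst hU (zero_add 1).le).continuousOn
  · exact (contDiffOn_partialFst hsnd hU (zero_add 1).le).continuousOn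
  · exact (contDiffOn_partialSnd hsnd hU (zero_add 1).le).continuousOn

end PartialDerivatives

lemma log_one_add_mul_sqrt_mul_le {lam : ℝ} (hlam : 0 ≤ lam) (m ℓ : ℝ) :
    Real.log (1 + m * √lam * ℓ) ≤
      (1 + |Real.log m|) * (1 + |Real.log ℓ| + |Real.log lam|) := by
  have hle (x : ℝ) : Real.posLog x ≤ |Real.log x| := max_le (abs_nonneg _) (le_abs_self _)
  have hsqrt : |Real.log √lam| ≤ |Real.log lam| := by
    rw [Real.log_sqrt hlam, abs_div, abs_two]
    exact half_le_self (abs_nonneg _)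
  calc Real.log (1 + m * √lam * ℓ)
      ≤ Real.posLog (1 + m * √lam * ℓ) := le_max_right _ _
    _ ≤ Real.log 2 + Real.posLog 1 + Real.posLog (m * √lam * ℓ) := Real.posLog_add
    _ ≤ Real.log 2 + (Real.posLog m + Real.posLog √lam + Real.posLog ℓ) := by
        rw [Real.posLog_one, add_zero]
        gcongr
        exact Real.posLog_mul.trans (add_le_add_left Real.posLog_mul _)
    _ ≤ 1 + (|Real.log m| + |Real.log lam| + |Real.log ℓ|) := by
        gcongr
        exacts [Real.log_two_lt_d9.le.trans (by norm_num), hle m, (hle _).trans hsqrt, hle ℓ]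
    _ ≤ (1 + |Real.log m|) * (1 + |Real.log ℓ| + |Real.log lam|) := by
        nlinarith [mul_nonneg (abs_nonneg (Real.log m))
          (add_nonneg (abs_nonneg (Real.log ℓ)) (abs_nonneg (Real.log lam)))]

lemma HasHessianOn.norm_setIntegral_cexp_le_abs_log {F u v A B D : ℝ × ℝ → ℝ}
    {a b c d κ K lam m : ℝ} (h : HasHessianOn F u v A B D (Icc a b ×ˢ Icc c d))
    (hb : HessianBounds κ K lam A B D (Icc a b ×ˢ Icc c d)) (hab : a ≤ b) (hcd : c ≤ d)
    (hlam : 0 < lam) (hK : 0 ≤ K) (hm : 0 < m) (hmκ : m < κ) (hmK : 4 * K * m < κ) :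
    ‖∫ z in Icc a b ×ˢ Icc c d, Complex.exp (Complex.I * F z)‖ ≤
      (8 / m + (1 + 4 * K) * (8 * Real.pi / m ^ 2)) * (1 + |Real.log m|) *
        (1 + |Real.log (b - a)| + |Real.log (d - c)| + |Real.log lam|) / lam := by
  set T := (1 + |Real.log m|) *
    (1 + |Real.log (b - a)| + |Real.log (d - c)| + |Real.log lam|) with hT
  have hfst : Real.log (1 + m * √lam * (b - a)) ≤ T := by
    refine (log_one_add_mul_sqrt_mul_le hlam.le m (b - a)).trans
      (mul_le_mul_of_nonneg_left ?_ (by positivity))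
    linarith [abs_nonneg (Real.log (d - c))]
  have hsnd : Real.log (1 + m * √lam * (d - c)) ≤ T := by
    refine (log_one_add_mul_sqrt_mul_le hlam.le m (d - c)).trans
      (mul_le_mul_of_nonneg_left ?_ (by positivity))
    linarith [abs_nonneg (Real.log (b - a))]
  calc _ ≤ _ := h.norm_setIntegral_cexp_le hb hab hcd hlam hK hm hmκ hmK
    _ ≤ 4 / (m * lam) * T + 4 / (m * lam) * T +
        (1 + 4 * K) * (8 * Real.pi / (m ^ 2 * lam) * T) := by gcongr
    _ = _ := by
        rw [mul_assoc _ _ (1 + |Real.log (b - a)| + |Real.log (d - c)| + |Real.log lam|), ← hT]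
        field_simp
        ring

theorem stmt_7_general (κ K : ℝ) (hκ : 0 < κ) (hκK : κ ≤ K) :
    ∃ C : ℝ, 0 < C ∧ ∀ (a b c d lam : ℝ) (f : ℝ → ℝ → ℝ),
      a < b → c < d → 0 < lam →
      (∃ U : Set (ℝ × ℝ), IsOpen U ∧ Set.Icc a b ×ˢ Set.Icc c d ⊆ U ∧
        ContDiffOn ℝ 2 (fun p : ℝ × ℝ => f p.1 p.2) U) →
      (∀ x₁ ∈ Set.Icc a b, ∀ x₂ ∈ Set.Icc c d,
        (κ * lam ≤ |deriv (deriv (fun t : ℝ => f t x₂)) x₁| ∧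
          |deriv (deriv (fun t : ℝ => f t x₂)) x₁| ≤ K * lam) ∧
        (κ * lam ≤ |deriv (deriv (f x₁)) x₂| ∧
          |deriv (deriv (f x₁)) x₂| ≤ K * lam) ∧
        |deriv (fun t : ℝ => deriv (f t) x₂) x₁| ≤ K * lam ∧
        κ * lam ^ 2 ≤
          |deriv (deriv (fun t : ℝ => f t x₂)) x₁ * deriv (deriv (f x₁)) x₂ -
            (deriv (fun t : ℝ => deriv (f t) x₂) x₁) ^ 2|) →
      ‖∫ x₁ in a..b, ∫ x₂ in c..d, Complex.exp (Complex.I * (f x₁ x₂ : ℂ))‖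
        ≤ C * (1 + |Real.log (b - a)| + |Real.log (d - c)| + |Real.log lam|) / lam := by
  have hK : 0 < K := hκ.trans_le hκK
  set m := κ / (1 + 4 * K)
  have hm : 0 < m := by positivity
  have hmκ : m < κ := div_lt_self hκ (by linarith)
  have hmK : 4 * K * m < κ := by
    have : (1 + 4 * K) * m = κ := mul_div_cancel₀ κ (by positivity)
    linarith
  refine ⟨(8 / m + (1 + 4 * K) * (8 * Real.pi / m ^ 2)) * (1 + |Real.log m|), ?_, ?_⟩
  · have := Real.pi_pos
    positivity
  rintro a b c d lam f hab hcd hlam ⟨U, hU, hRU, hF⟩ hbd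
  set F : ℝ × ℝ → ℝ := fun p => f p.1 p.2
  have hH := (hasHessianOn_of_contDiffOn hF hU).mono hRU
  have hb : HessianBounds κ K lam (partialFst (partialFst F)) (partialFst (partialSnd F))
      (partialSnd (partialSnd F)) (Icc a b ×ˢ Icc c d) := by
    constructor <;> intro p hp <;> obtain ⟨⟨h₁, h₂⟩, ⟨h₃, h₄⟩, h₅, h₆⟩ := hbd p.1 hp.1 p.2 hp.2 <;>
      assumption
  have hcont : ContinuousOn (fun z => Complex.exp (Complex.I * F z)) (Icc a b ×ˢ Icc c d) := by
    have := hF.continuousOn.mono hRU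
    fun_prop
  rw [← setIntegral_Icc_prod_Icc_eq hab.le hcd.le hcont]
  exact hH.norm_setIntegral_cexp_le_abs_log hb hab.le hcd.le hlam hK.le hm hmκ hmK

/-- the two-dimensional second-derivative test, Lemma 2.7 of the
paper.  For every `n ≥ 1` and `0 < κ ≤ K` there is `C > 0` such that whenever
`f` is a real-valued phase, twice continuously differentiable on an open
neighbourhood of the rectangle `D = [a,b] × [c,d]`, algebraic of degree at most
`n` over `D`, whose pure second partials have size `≍ λ`, whose mixed second
partial is `O(λ)`, and whose Hessian determinant is `≫ λ²` throughout `D`, then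
`|∬_D e^{i f}| ≤ C·(1 + |log(b-a)| + |log(d-c)| + |log λ|)/λ`. -/
theorem stmt_7 (n : ℕ) (hn : 1 ≤ n) (κ K : ℝ) (hκ : 0 < κ) (hκK : κ ≤ K) :
    ∃ C : ℝ, 0 < C ∧ ∀ (a b c d lam : ℝ) (f : ℝ → ℝ → ℝ),
      a < b → c < d → 0 < lam →
      (∃ U : Set (ℝ × ℝ), IsOpen U ∧ Set.Icc a b ×ˢ Set.Icc c d ⊆ U ∧
        ContDiffOn ℝ 2 (fun p : ℝ × ℝ => f p.1 p.2) U) →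
      (∃ P : MvPolynomial (Fin 3) ℝ, P ≠ 0 ∧ P.totalDegree ≤ n ∧
        ∀ x₁ ∈ Set.Icc a b, ∀ x₂ ∈ Set.Icc c d,
          MvPolynomial.eval ![x₁, x₂, f x₁ x₂] P = 0) →
      (∀ x₁ ∈ Set.Icc a b, ∀ x₂ ∈ Set.Icc c d,
        (κ * lam ≤ |deriv (deriv (fun t : ℝ => f t x₂)) x₁| ∧
          |deriv (deriv (fun t : ℝ => f t x₂)) x₁| ≤ K * lam) ∧
        (κ * lam ≤ |deriv (deriv (f x₁)) x₂| ∧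
          |deriv (deriv (f x₁)) x₂| ≤ K * lam) ∧
        |deriv (fun t : ℝ => deriv (f t) x₂) x₁| ≤ K * lam ∧
        κ * lam ^ 2 ≤
          |deriv (deriv (fun t : ℝ => f t x₂)) x₁ * deriv (deriv (f x₁)) x₂ -
            (deriv (fun t : ℝ => deriv (f t) x₂) x₁) ^ 2|) →
      ‖∫ x₁ in a..b, ∫ x₂ in c..d, Complex.exp (Complex.I * (f x₁ x₂ : ℂ))‖
        ≤ C * (1 + |Real.log (b - a)| + |Real.log (d - c)| + |Real.log lam|) / lam := by
  obtain ⟨C, hC, h⟩ := stmt_7_general κ K hκ hκK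
  exact ⟨C, hC, fun a b c d lam f hab hcd hlam hf _ => h a b c d lam f hab hcd hlam hf⟩
end
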